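/- There exist universal constants c > 0 and c' > 0 such that the following holds for all positive integers n and d ≥ 2, and all reals σ, f > 0. Given symmetric matrices A_1, ..., A_n ∈ ℝ^{d×d} satisfying ‖∑_{i=1}^n A_i²‖_op ≤ σ² and ∑_{i=1}^n ‖A_i‖_F² ≤ n f², and a point x_0 ∈ (−1,1)^n, there exists a point x ∈ [−1,1]^n such that ‖∑_{i=1}^n (x_i − x_{0,i}) A_i‖_op ≤ c (σ + (log d)^{3/4} √(σ f)) and the number of indices i with x_i ∈ {−1, +1} is at least c' n. -/

import Mathlib

open MeasureTheory ProbabilityTheory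

/-- Operator norm (largest singular value) of a real matrix, as the norm of the
induced linear map between Euclidean spaces. -/
noncomputable def opNorm {m n : Type*} [Fintype m] [Fintype n] [DecidableEq n]
    (M : Matrix m n ℝ) : ℝ :=
  ‖LinearMap.toContinuousLinearMap (Matrix.toEuclideanLin M)‖

/-- Squared Frobenius norm of a real matrix. -/
noncomputable def frobNormSq {m n : Type*} [Fintype m] [Fintype n]
    (M : Matrix m n ℝ) : ℝ := ∑ i, ∑ j, (M i j) ^ 2

/-!
Pass to a subspace `H` of `ℝⁿ`, of codimension at most `n / 10`, on which the pencil
`X z = ∑ zᵢ Aᵢ` satisfies `‖X z‖_F² ≤ 10 f² ‖z‖²`. Gaussian integration by parts expands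
`𝔼 tr (X g)²ᵖ` over pairings. Non-crossing pairings contribute as for a semicircular variable of
variance `σ²`, each crossing costs a factor of order `(f / σ)²`, and for `p` of order `log d` both
kinds are controlled by `E = σ + (log d)^{3/4} √(σ f)`, so that `𝔼 tr (X g)²ᵖ ≤ (100 E)²ᵖ`.

Now walk in the cube from `x₀`, with a noise level `β` that starts at a constant, keeping the
potential `𝔼 tr (X z + β X g)²ᵖ` from growing. As long as few coordinates are tight, the directions
in `H` orthogonal to the current position and to the tight coordinates span a space of dimension
more than `r² = n / 2`. Averaging over an orthonormal basis of this space produces a unit direction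
`u` for which the second order cost of the step `z + r β sin θ • u` is paid for by lowering the
noise to `β cos θ`. Since `‖z‖²` grows by `r²` times the decrease of `β²` and the cube is bounded,
the walk stalls at some `β > 0`, where many coordinates must be tight. By Jensen's inequality
`‖X z‖²ᵖ` is at most the potential at the endpoint.
-/

namespace PartialColoring

open scoped RealInnerProductSpace Topology ContDiff

section TemperateGrowth

variable {E F G : Type*} [NormedAddCommGroup E] [NormedSpace ℝ E] [NormedAddCommGroup F]
  [NormedSpace ℝ F] [NormedAddCommGroup G] [NormedSpace ℝ G]

theorem hasTemperateGrowth_fderiv {f : E → F} (hf : f.HasTemperateGrowth) :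
    (fderiv ℝ f).HasTemperateGrowth := by
  refine ⟨hf.1.fderiv_right (by simp), fun n ↦ ?_⟩
  simpa only [norm_iteratedFDeriv_fderiv] using hf.2 (n + 1)

theorem abs_iteratedDeriv_sin_cos_le (n : ℕ) (x : ℝ) :
    |iteratedDeriv n Real.sin x| ≤ 1 ∧ |iteratedDeriv n Real.cos x| ≤ 1 := by
  induction n with
  | zero => simp [Real.abs_sin_le_one, Real.abs_cos_le_one]
  | succ n ih =>
    simpa only [Real.iteratedDeriv_add_one_sin, Real.iteratedDeriv_add_one_cos, Pi.neg_apply,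
      abs_neg] using ih.symm

@[fun_prop]
theorem hasTemperateGrowth_sin : Real.sin.HasTemperateGrowth :=
  ⟨Real.contDiff_sin, fun n ↦ ⟨0, 1, fun x ↦ by
    simpa [norm_iteratedFDeriv_eq_norm_iteratedDeriv] using (abs_iteratedDeriv_sin_cos_le n x).1⟩⟩

@[fun_prop]
theorem hasTemperateGrowth_cos : Real.cos.HasTemperateGrowth :=
  ⟨Real.contDiff_cos, fun n ↦ ⟨0, 1, fun x ↦ by
    simpa [norm_iteratedFDeriv_eq_norm_iteratedDeriv] using (abs_iteratedDeriv_sin_cos_le n x).2⟩⟩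

theorem exists_norm_le_of_hasTemperateGrowth {f : E → F} (hf : f.HasTemperateGrowth) :
    ∃ (k : ℕ) (C : ℝ), 0 ≤ C ∧ ∀ x, ‖f x‖ ≤ C * (1 + ‖x‖) ^ k := by
  obtain ⟨k, C, hC, h⟩ := hf.norm_iteratedFDeriv_le_uniform 0
  exact ⟨k, C, hC, fun x ↦ by simpa using h 0 le_rfl x⟩

@[fun_prop]
theorem hasTemperateGrowth_fst : (Prod.fst : E × F → E).HasTemperateGrowth :=
  (ContinuousLinearMap.fst ℝ E F).hasTemperateGrowth

@[fun_prop]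
theorem hasTemperateGrowth_snd : (Prod.snd : E × F → F).HasTemperateGrowth :=
  (ContinuousLinearMap.snd ℝ E F).hasTemperateGrowth

@[fun_prop]
theorem hasTemperateGrowth_prodMk {f : E → F} {g : E → G} (hf : f.HasTemperateGrowth)
    (hg : g.HasTemperateGrowth) : (fun x ↦ (f x, g x)).HasTemperateGrowth := by
  have h := ((ContinuousLinearMap.inl ℝ F G).hasTemperateGrowth.comp hf).add
    ((ContinuousLinearMap.inr ℝ F G).hasTemperateGrowth.comp hg)
  convert h using 1
  ext x <;> simp

@[fun_prop]
theorem hasTemperateGrowth_clm_apply {f : E → F →L[ℝ] G} {g : E → F} (hf : f.HasTemperateGrowth)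
    (hg : g.HasTemperateGrowth) : (fun x ↦ f x (g x)).HasTemperateGrowth :=
  (ContinuousLinearMap.id ℝ (F →L[ℝ] G)).bilinear_hasTemperateGrowth hf hg

end TemperateGrowth

section GaussianIntegral

variable {E F G P : Type*} [NormedAddCommGroup E] [NormedSpace ℝ E] [CompleteSpace E]
  [SecondCountableTopology E] [MeasurableSpace E] [BorelSpace E] {μ : Measure E} [IsGaussian μ]
  [NormedAddCommGroup P] [NormedSpace ℝ P]
  [NormedAddCommGroup G] [NormedSpace ℝ G]

theorem integrable_add_norm_pow (a : ℝ) (k : ℕ) : Integrable (fun x ↦ (a + ‖x‖) ^ k) μ := by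
  have h : MemLp (fun x ↦ a + ‖x‖) k μ :=
    (memLp_const a).add (IsGaussian.memLp_id μ k (by simp)).norm
  refine (integrable_norm_iff (by fun_prop)).1 ?_
  simpa using h.integrable_norm_pow'

theorem integrable_of_hasTemperateGrowth {f : E → G} (hf : f.HasTemperateGrowth) :
    Integrable f μ := by
  obtain ⟨k, C, -, h⟩ := exists_norm_le_of_hasTemperateGrowth hf
  exact ((integrable_add_norm_pow 1 k).const_mul C).mono' hf.1.continuous.aestronglyMeasurable
    (.of_forall h)

theorem exists_integrable_bound {f : P × E → G} (hf : f.HasTemperateGrowth) (p₀ : P) :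
    ∃ g : E → ℝ, Integrable g μ ∧ ∀ p ∈ Metric.ball p₀ 1, ∀ x, ‖f (p, x)‖ ≤ g x := by
  obtain ⟨k, C, hC, h⟩ := exists_norm_le_of_hasTemperateGrowth hf
  refine ⟨_, (integrable_add_norm_pow (2 + ‖p₀‖) k).const_mul C, fun p hp x ↦ (h _).trans ?_⟩
  have hp : ‖p‖ ≤ ‖p₀‖ + 1 := by
    linarith [norm_le_norm_add_norm_sub' p p₀, mem_ball_iff_norm.1 hp]
  have : ‖(p, x)‖ ≤ ‖p‖ + ‖x‖ := by simp [Prod.norm_def]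
  have : 0 ≤ ‖p₀‖ := norm_nonneg p₀
  exact mul_le_mul_of_nonneg_left (pow_le_pow_left₀ (by positivity) (by linarith) k) hC

theorem continuous_integral_of_hasTemperateGrowth {f : P × E → G} (hf : f.HasTemperateGrowth) :
    Continuous fun p ↦ ∫ x, f (p, x) ∂μ := by
  refine continuous_iff_continuousAt.2 fun p₀ ↦ ?_
  obtain ⟨g, hg, hfg⟩ := exists_integrable_bound (μ := μ) hf p₀
  have hf' := hf.1.continuous
  refine continuousAt_of_dominated (.of_forall fun p ↦ ?_) ?_ hg (.of_forall fun x ↦ by fun_prop)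
  · exact (by fun_prop : Continuous fun x ↦ f (p, x)).aestronglyMeasurable
  · filter_upwards [Metric.ball_mem_nhds p₀ one_pos] with p hp using .of_forall (hfg p hp)

theorem hasDerivAt_integral_of_hasTemperateGrowth {f : ℝ × E → G} (hf : f.HasTemperateGrowth)
    {θ : ℝ} {f' : E → G} (hf' : ∀ x, HasDerivAt (fun t ↦ f (t, x)) (f' x) θ) :
    HasDerivAt (fun t ↦ ∫ x, f (t, x) ∂μ) (∫ x, f' x ∂μ) θ := by
  have hdf : (fun p ↦ fderiv ℝ f p (1, 0)).HasTemperateGrowth := by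
    have := hasTemperateGrowth_fderiv hf
    fun_prop
  have hcurve (t : ℝ) (x : E) : HasDerivAt (fun t ↦ f (t, x)) (fderiv ℝ f (t, x) (1, 0)) t :=
    (hf.1.differentiable (by simp) (t, x)).hasFDerivAt.comp_hasDerivAt t
      ((hasDerivAt_id t).prodMk (hasDerivAt_const t x))
  obtain rfl : f' = fun x ↦ fderiv ℝ f (θ, x) (1, 0) :=
    funext fun x ↦ (hf' x).unique (hcurve θ x)
  obtain ⟨g, hg, hfg⟩ := exists_integrable_bound (μ := μ) hdf θ
  refine (hasDerivAt_integral_of_dominated_loc_of_deriv_le (Metric.ball_mem_nhds θ one_pos)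
    (.of_forall fun t ↦ ?_) ?_ ?_ (.of_forall fun x t ht ↦ hfg t ht x) hg
    (.of_forall fun x t _ ↦ hcurve t x)).2
  · exact (integrable_of_hasTemperateGrowth (by fun_prop)).aestronglyMeasurable
  · exact integrable_of_hasTemperateGrowth (by fun_prop)
  · exact (integrable_of_hasTemperateGrowth (by fun_prop)).aestronglyMeasurable

end GaussianIntegral

section Stein

variable {E F G : Type*} [NormedAddCommGroup E] [InnerProductSpace ℝ E] [FiniteDimensional ℝ E]
  [MeasurableSpace E] [BorelSpace E]
  [NormedAddCommGroup G] [NormedSpace ℝ G]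

theorem integral_comp_rotation (θ : ℝ) {f : E × E → G} (hf : Continuous f) :
    ∫ p, f (ContinuousLinearMap.rotation θ p) ∂((stdGaussian E).prod (stdGaussian E)) =
      ∫ p, f p ∂((stdGaussian E).prod (stdGaussian E)) := by
  conv_rhs => rw [← IsGaussian.map_rotation_eq_self integral_id_stdGaussian θ]
  exact (integral_map (by fun_prop) hf.aestronglyMeasurable).symm

theorem integral_inner_mul_inner_stdGaussian (v w : E) :
    ∫ x, ⟪v, x⟫ * ⟪w, x⟫ ∂stdGaussian E = ⟪v, w⟫ := by
  have h := covarianceBilin_apply (IsGaussian.memLp_two_id (μ := stdGaussian E)) v w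
  simpa [covarianceBilin_stdGaussian, integral_id_stdGaussian, innerSL_apply_apply ℝ] using h.symm

theorem hasDerivAt_cos_smul_add_sin_smul {F : Type*} [NormedAddCommGroup F] [NormedSpace ℝ F]
    (x y : F) (θ : ℝ) : HasDerivAt (fun t ↦ Real.cos t • x + Real.sin t • y)
      (-Real.sin θ • x + Real.cos θ • y) θ :=
  ((Real.hasDerivAt_cos θ).smul_const x).fun_add ((Real.hasDerivAt_sin θ).smul_const y)

variable {G₁ G₂ : Type*} [NormedAddCommGroup G₁] [NormedSpace ℝ G₁]
  [NormedAddCommGroup G₂] [NormedSpace ℝ G₂]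

variable {f : E → G₁} {g : E → G₂}

theorem hasDerivAt_integral_bilin_rotation (B : G₁ →L[ℝ] G₂ →L[ℝ] G) (hf : f.HasTemperateGrowth)
    (hg : g.HasTemperateGrowth) (θ : ℝ) :
    HasDerivAt (fun t ↦ ∫ p : E × E, B (f p.1) (g (Real.cos t • p.1 + Real.sin t • p.2))
        ∂(stdGaussian E).prod (stdGaussian E))
      (∫ q : E × E, B (f (Real.cos θ • q.1 - Real.sin θ • q.2)) (fderiv ℝ g q.1 q.2)
        ∂(stdGaussian E).prod (stdGaussian E)) θ := by
  have hdg := (hasTemperateGrowth_fderiv hg).1.continuous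
  have hfc := hf.1.continuous
  rw [← integral_comp_rotation θ (by fun_prop)]
  refine hasDerivAt_integral_of_hasTemperateGrowth
    (f := fun q : ℝ × E × E ↦ B (f q.2.1) (g (Real.cos q.1 • q.2.1 + Real.sin q.1 • q.2.2)))
    (B.bilinear_hasTemperateGrowth (hf.comp (by fun_prop)) (hg.comp (by fun_prop))) fun p ↦ ?_
  have hback : Real.cos θ • (ContinuousLinearMap.rotation θ p).1 -
      Real.sin θ • (ContinuousLinearMap.rotation θ p).2 = p.1 := by
    calc _ = (Real.cos θ ^ 2 + Real.sin θ ^ 2) • p.1 := by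
          simp only [ContinuousLinearMap.rotation_apply]
          module
      _ = p.1 := by rw [Real.cos_sq_add_sin_sq, one_smul]
  simp only [hback]
  exact (B (f p.1)).hasFDerivAt.comp_hasDerivAt θ
    ((hg.1.differentiable (by simp) _).hasFDerivAt.comp_hasDerivAt θ
      (hasDerivAt_cos_smul_add_sin_smul p.1 p.2 θ))

variable [CompleteSpace G]

theorem integral_inner_stdGaussian (w : E) : ∫ x, ⟪w, x⟫ ∂stdGaussian E = 0 := by
  simpa using integral_strongDual_stdGaussian (innerSL ℝ w)

theorem integral_inner_smul_clm_stdGaussian (w : E) (L : E →L[ℝ] G) :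
    ∫ x, ⟪w, x⟫ • L x ∂stdGaussian E = L w := by
  let b := stdOrthonormalBasis ℝ E
  calc ∫ x, ⟪w, x⟫ • L x ∂stdGaussian E
      = ∫ x, ∑ j, (⟪w, x⟫ * ⟪b j, x⟫) • L (b j) ∂stdGaussian E := by
        congr! 2 with x
        simp only [mul_smul, ← Finset.smul_sum, ← map_smul, ← map_sum, b.sum_repr']
    _ = ∑ j, ⟪w, b j⟫ • L (b j) := by
        rw [integral_finsetSum _ fun j _ ↦ integrable_of_hasTemperateGrowth (by fun_prop)]
        simp_rw [integral_smul_const, integral_inner_mul_inner_stdGaussian]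
    _ = L w := by
        conv_rhs => rw [← b.sum_repr' w, map_sum]
        simp [real_inner_comm]

theorem integral_inner_smul_stdGaussian {f : E → G} (hf : f.HasTemperateGrowth) (w : E) :
    ∫ x, ⟪w, x⟫ • f x ∂stdGaussian E = ∫ x, fderiv ℝ f x w ∂stdGaussian E := by
  set γ := stdGaussian E
  let H (q : ℝ × E × E) : G :=
    ⟪w, -Real.sin q.1 • q.2.1 + Real.cos q.1 • q.2.2⟫ •
      f (Real.cos q.1 • q.2.1 + Real.sin q.1 • q.2.2)
  have hdf := hasTemperateGrowth_fderiv hf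
  have hH : H.HasTemperateGrowth := by
    refine .smul (.comp (Function.hasTemperateGrowth_inner_right w) ?_) (.comp hf ?_) <;> fun_prop
  have hconst (θ : ℝ) : ∫ p, H (θ, p) ∂γ.prod γ = 0 := by
    calc ∫ p, H (θ, p) ∂γ.prod γ = ∫ p : E × E, ⟪w, p.2⟫ • f p.1 ∂γ.prod γ :=
          integral_comp_rotation θ (f := fun p : E × E ↦ ⟪w, p.2⟫ • f p.1)
            (by have := hf.1.continuous; fun_prop)
      _ = 0 := by
          rw [integral_prod _ (integrable_of_hasTemperateGrowth (by fun_prop))]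
          simp [integral_smul_const, γ, integral_inner_stdGaussian]
  have hderiv (p : E × E) :
      HasDerivAt (fun θ ↦ H (θ, p)) (⟪w, p.2⟫ • fderiv ℝ f p.1 p.2 - ⟪w, p.1⟫ • f p.1) 0 := by
    have hx := hasDerivAt_cos_smul_add_sin_smul p.1 p.2 0
    have hy : HasDerivAt (fun θ ↦ -Real.sin θ • p.1 + Real.cos θ • p.2) (-p.1) 0 := by
      simpa [add_comm] using hasDerivAt_cos_smul_add_sin_smul p.2 (-p.1) 0
    have hfx := (hf.1.differentiable (by simp) _).hasFDerivAt.comp_hasDerivAt 0 hx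
    simpa [H, sub_eq_add_neg, Function.comp_def] using
      ((innerSL ℝ w).hasFDerivAt.comp_hasDerivAt 0 hy).fun_smul hfx
  have h0 := (hasDerivAt_integral_of_hasTemperateGrowth (μ := γ.prod γ) hH hderiv).unique
    ((hasDerivAt_const _ 0).congr_of_eventuallyEq (.of_forall hconst))
  rw [integral_sub (integrable_of_hasTemperateGrowth (by fun_prop))
    (integrable_of_hasTemperateGrowth (by fun_prop)), sub_eq_zero,
    integral_prod _ (integrable_of_hasTemperateGrowth (by fun_prop)),
    integral_fun_fst (μ := γ) (ν := γ) fun x ↦ ⟪w, x⟫ • f x] at h0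
  simpa [γ, integral_inner_smul_clm_stdGaussian] using h0.symm

theorem integral_clm_apply_self_stdGaussian {Φ : E → E →L[ℝ] G} (hΦ : Φ.HasTemperateGrowth) :
    ∫ x, Φ x x ∂stdGaussian E = ∫ x, ∑ j, fderiv ℝ Φ x (stdOrthonormalBasis ℝ E j)
      (stdOrthonormalBasis ℝ E j) ∂stdGaussian E := by
  set b := stdOrthonormalBasis ℝ E
  have hdΦ := hasTemperateGrowth_fderiv hΦ
  calc ∫ x, Φ x x ∂stdGaussian E = ∫ x, ∑ j, ⟪b j, x⟫ • Φ x (b j) ∂stdGaussian E := by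
        simp only [← map_smul, ← map_sum, b.sum_repr']
    _ = ∑ j, ∫ x, fderiv ℝ (fun x ↦ Φ x (b j)) x (b j) ∂stdGaussian E := by
        rw [integral_finsetSum _ fun j _ ↦ integrable_of_hasTemperateGrowth (by fun_prop)]
        simp_rw [fun j ↦ integral_inner_smul_stdGaussian
          (f := fun x ↦ Φ x (b j)) (by fun_prop) (b j)]
    _ = ∫ x, ∑ j, fderiv ℝ Φ x (b j) (b j) ∂stdGaussian E := by
        rw [integral_finsetSum _ fun j _ ↦ integrable_of_hasTemperateGrowth (by fun_prop)]
        congr! 3 with j - x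
        rw [fderiv_clm_apply (hΦ.1.differentiable (by simp) x) (by fun_prop)]
        simp

theorem integral_bilin_apply_clm_stdGaussian (B : G₁ →L[ℝ] G₂ →L[ℝ] G)
    (hf : f.HasTemperateGrowth) (L : E →L[ℝ] G₂) :
    ∫ x, B (f x) (L x) ∂stdGaussian E = ∫ x, ∑ j, B (fderiv ℝ f x (stdOrthonormalBasis ℝ E j))
      (L (stdOrthonormalBasis ℝ E j)) ∂stdGaussian E := by
  let Λ : G₁ →L[ℝ] E →L[ℝ] G := (ContinuousLinearMap.precomp G L).comp B
  have hΛ (x v : E) : fderiv ℝ (fun x ↦ Λ (f x)) x v = Λ (fderiv ℝ f x v) := by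
    exact congr($((Λ.hasFDerivAt.comp x (hf.1.differentiable (by simp) x).hasFDerivAt).fderiv) v)
  calc ∫ x, B (f x) (L x) ∂stdGaussian E = ∫ x, Λ (f x) x ∂stdGaussian E := rfl
    _ = _ := by
      rw [integral_clm_apply_self_stdGaussian (Φ := fun x ↦ Λ (f x)) (Λ.hasTemperateGrowth.comp hf)]
      simp_rw [hΛ]
      rfl

variable {h : E → ℝ}

theorem norm_integral_bilin_comp_sub_smul_apply_clm_le (B : G₁ →L[ℝ] G₂ →L[ℝ] G)
    (hf : f.HasTemperateGrowth) (hh : h.HasTemperateGrowth) (L : E →L[ℝ] G₂)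
    (hle : ∀ x, ‖∑ j, B (fderiv ℝ f x (stdOrthonormalBasis ℝ E j))
      (L (stdOrthonormalBasis ℝ E j))‖ ≤ h x) (θ : ℝ) (u : E) :
    ‖∫ w, B (f (Real.cos θ • u - Real.sin θ • w)) (L w) ∂stdGaussian E‖ ≤
      ∫ w, h (Real.cos θ • u - Real.sin θ • w) ∂stdGaussian E := by
  have hfd (w v : E) : fderiv ℝ (fun w ↦ f (Real.cos θ • u - Real.sin θ • w)) w v =
      -Real.sin θ • fderiv ℝ f (Real.cos θ • u - Real.sin θ • w) v := by
    have hc : HasFDerivAt (fun w ↦ Real.cos θ • u - Real.sin θ • w)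
        (-(Real.sin θ • ContinuousLinearMap.id ℝ E)) w :=
      ((hasFDerivAt_id w).const_smul (Real.sin θ)).const_sub _
    have hfc := (hf.1.differentiable (by simp) _).hasFDerivAt.comp w hc
    simpa [Function.comp_def] using congr($(hfc.fderiv) v)
  rw [integral_bilin_apply_clm_stdGaussian B
    (f := fun w ↦ f (Real.cos θ • u - Real.sin θ • w)) (hf.comp (by fun_prop)) L]
  refine norm_integral_le_of_norm_le (integrable_of_hasTemperateGrowth (hh.comp (by fun_prop)))
    (.of_forall fun w ↦ ?_)
  simp_rw [hfd, map_smul, smul_apply, ← Finset.smul_sum]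
  rw [norm_smul, norm_neg, Real.norm_eq_abs]
  exact (mul_le_of_le_one_left (norm_nonneg _) (Real.abs_sin_le_one θ)).trans (hle _)

theorem norm_integral_bilin_fderiv_rotation_le (B : G₁ →L[ℝ] G₂ →L[ℝ] G)
    (hf : f.HasTemperateGrowth) (hg : g.HasTemperateGrowth) (hh : h.HasTemperateGrowth)
    (hle : ∀ x y, ‖∑ j, B (fderiv ℝ f x (stdOrthonormalBasis ℝ E j))
      (fderiv ℝ g y (stdOrthonormalBasis ℝ E j))‖ ≤ h x + h y) (θ : ℝ) :
    ‖∫ q : E × E, B (f (Real.cos θ • q.1 - Real.sin θ • q.2)) (fderiv ℝ g q.1 q.2)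
        ∂(stdGaussian E).prod (stdGaussian E)‖ ≤ 2 * ∫ x, h x ∂stdGaussian E := by
  set γ := stdGaussian E
  have hdg := hasTemperateGrowth_fderiv hg
  have hint : Integrable
      (fun q : E × E ↦ h (Real.cos θ • q.1 - Real.sin θ • q.2) + h q.1) (γ.prod γ) :=
    integrable_of_hasTemperateGrowth (.add (hh.comp (by fun_prop)) (hh.comp (by fun_prop)))
  have hrot : ∫ q : E × E, h (Real.cos θ • q.1 - Real.sin θ • q.2) ∂γ.prod γ = ∫ x, h x ∂γ := by
    have h' := integral_comp_rotation (-θ) (f := fun q : E × E ↦ h q.1)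
      (by have := hh.1.continuous; fun_prop)
    simpa [ContinuousLinearMap.rotation_apply, sub_eq_add_neg, γ, integral_fun_fst] using h'
  have hB : (fun q : E × E ↦ B (f (Real.cos θ • q.1 - Real.sin θ • q.2))
      (fderiv ℝ g q.1 q.2)).HasTemperateGrowth :=
    B.bilinear_hasTemperateGrowth (hf.comp (by fun_prop))
      (hasTemperateGrowth_clm_apply (hdg.comp hasTemperateGrowth_fst) hasTemperateGrowth_snd)
  rw [integral_prod _ (integrable_of_hasTemperateGrowth hB)]
  calc _ ≤ ∫ u, ∫ w, (h (Real.cos θ • u - Real.sin θ • w) + h u) ∂γ ∂γ :=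
        norm_integral_le_of_norm_le hint.integral_prod_left (.of_forall fun u ↦
          norm_integral_bilin_comp_sub_smul_apply_clm_le B hf (.add hh (by fun_prop))
            (fderiv ℝ g u) (hle · u) θ u)
    _ = ∫ q : E × E, h (Real.cos θ • q.1 - Real.sin θ • q.2) ∂γ.prod γ +
          ∫ q : E × E, h q.1 ∂γ.prod γ := by
        rw [← integral_prod _ hint]
        exact integral_add (integrable_of_hasTemperateGrowth (hh.comp (by fun_prop)))
          (integrable_of_hasTemperateGrowth (hh.comp (by fun_prop)))
    _ = 2 * ∫ x, h x ∂γ := by simp [hrot, γ, integral_fun_fst, two_mul]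

/- Interpolate along `θ ↦ (x, cos θ x + sin θ y)` between the coupled and the independent pair. -/
theorem norm_integral_bilin_sub_le (B : G₁ →L[ℝ] G₂ →L[ℝ] G) [CompleteSpace G₁] [CompleteSpace G₂]
    (hf : f.HasTemperateGrowth) (hg : g.HasTemperateGrowth) (hh : h.HasTemperateGrowth)
    (hle : ∀ x y, ‖∑ j, B (fderiv ℝ f x (stdOrthonormalBasis ℝ E j))
      (fderiv ℝ g y (stdOrthonormalBasis ℝ E j))‖ ≤ h x + h y) :
    ‖∫ x, B (f x) (g x) ∂stdGaussian E -
        B (∫ x, f x ∂stdGaussian E) (∫ x, g x ∂stdGaussian E)‖ ≤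
      Real.pi * ∫ x, h x ∂stdGaussian E := by
  have hmv := norm_image_sub_le_of_norm_deriv_le_segment' (a := 0) (b := Real.pi / 2)
    (fun t _ ↦ (hasDerivAt_integral_bilin_rotation B hf hg t).hasDerivWithinAt)
    (fun t _ ↦ norm_integral_bilin_fderiv_rotation_le B hf hg hh hle t)
    (Real.pi / 2) ⟨by positivity, le_rfl⟩
  have h0 : ∫ p : E × E, B (f p.1) (g p.1) ∂(stdGaussian E).prod (stdGaussian E) =
      ∫ x, B (f x) (g x) ∂stdGaussian E := by
    simpa using integral_fun_fst (μ := stdGaussian E) (ν := stdGaussian E) fun x ↦ B (f x) (g x)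
  have h1 : ∫ p : E × E, B (f p.1) (g p.2) ∂(stdGaussian E).prod (stdGaussian E) =
      B (∫ x, f x ∂stdGaussian E) (∫ x, g x ∂stdGaussian E) := by
    rw [integral_prod _ (integrable_of_hasTemperateGrowth
      (B.bilinear_hasTemperateGrowth (f := fun p : E × E ↦ f p.1) (g := fun p ↦ g p.2)
        (hf.comp hasTemperateGrowth_fst) (hg.comp hasTemperateGrowth_snd)))]
    simp_rw [ContinuousLinearMap.integral_comp_comm _ (integrable_of_hasTemperateGrowth hg)]
    exact (B.flip _).integral_comp_comm (integrable_of_hasTemperateGrowth hf)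
  simp only [Real.cos_zero, Real.sin_zero, Real.cos_pi_div_two, Real.sin_pi_div_two, one_smul,
    zero_smul, add_zero, zero_add, h0, h1, norm_sub_rev (B _ _)] at hmv
  linarith

end Stein

section Spectral

variable {ι V : Type*} [Fintype ι] [NormedAddCommGroup V] [InnerProductSpace ℝ V]

/-- `u` is an orthonormal basis of eigenvectors of `T`, with eigenvalues `l`. -/
def IsEigenbasis (T : V →L[ℝ] V) (u : OrthonormalBasis ι ℝ V) (l : ι → ℝ) : Prop :=
  ∀ i, T (u i) = l i • u i

namespace IsEigenbasis

variable {T : V →L[ℝ] V} {u : OrthonormalBasis ι ℝ V} {l : ι → ℝ} (h : IsEigenbasis T u l)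
include h

theorem pow (n : ℕ) : IsEigenbasis (T ^ n) u (fun i ↦ l i ^ n) := by
  intro i
  induction n with
  | zero => simp
  | succ n ih => simp only [pow_succ' T, mul_apply_eq_comp, ih, map_smul, h i, smul_smul, pow_succ]

theorem apply_eq_sum (w : V) : T w = ∑ i, (l i * ⟪u i, w⟫) • u i := by
  conv_lhs => rw [← u.sum_repr' w, map_sum]
  simp only [map_smul, h _, smul_smul, mul_comm]

theorem inner_comp (A : V →L[ℝ] V) (y w : V) :
    ⟪y, A (T w)⟫ = ∑ i, l i * (⟪y, A (u i)⟫ * ⟪u i, w⟫) := by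
  rw [h.apply_eq_sum, map_sum, inner_sum]
  congr! 1 with i
  rw [map_smul, inner_smul_right]
  ring

theorem norm_apply_sq (w : V) : ‖T w‖ ^ 2 = ∑ i, l i ^ 2 * ⟪u i, w⟫ ^ 2 := by
  rw [← u.sum_sq_inner_right]
  congr! 1 with i
  rw [h.apply_eq_sum, u.orthonormal.inner_right_fintype, mul_pow]

theorem abs_le_norm (i : ι) : |l i| ≤ ‖T‖ := by
  simpa [h i, norm_smul] using T.le_opNorm (u i)

theorem norm_le {c : ℝ} (hc : 0 ≤ c) (hl : ∀ i, |l i| ≤ c) : ‖T‖ ≤ c := by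
  refine T.opNorm_le_bound hc fun w ↦ (sq_le_sq₀ (norm_nonneg _) (by positivity)).1 ?_
  rw [h.norm_apply_sq, mul_pow, ← u.sum_sq_inner_right w, Finset.mul_sum]
  gcongr ∑ i, ?_ * _ with i
  exact sq_le_sq.2 ((hl i).trans (le_abs_self c))

end IsEigenbasis

variable [FiniteDimensional ℝ V]

/-- The trace of an endomorphism, as a continuous linear functional. -/
noncomputable def opTrace : (V →L[ℝ] V) →L[ℝ] ℝ :=
  LinearMap.toContinuousLinearMap (LinearMap.trace ℝ V ∘ₗ ContinuousLinearMap.coeLM ℝ)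

theorem opTrace_eq_sum_inner (u : OrthonormalBasis ι ℝ V) (T : V →L[ℝ] V) :
    opTrace T = ∑ i, ⟪u i, T (u i)⟫ :=
  LinearMap.trace_eq_sum_inner T.toLinearMap u

theorem opTrace_mul_comm (S T : V →L[ℝ] V) : opTrace (S * T) = opTrace (T * S) :=
  LinearMap.trace_mul_comm ℝ S.toLinearMap T.toLinearMap

theorem opTrace_mul_self_eq_sum_norm_sq (u : OrthonormalBasis ι ℝ V) {T : V →L[ℝ] V}
    (hT : (T : V →ₗ[ℝ] V).IsSymmetric) : opTrace (T * T) = ∑ i, ‖T (u i)‖ ^ 2 := by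
  rw [opTrace_eq_sum_inner u]
  congr! with i
  rw [← real_inner_self_eq_norm_sq]
  exact (hT _ _).symm

theorem exists_isEigenbasis {T : V →L[ℝ] V} (hT : (T : V →ₗ[ℝ] V).IsSymmetric) :
    ∃ (u : OrthonormalBasis (Fin (Module.finrank ℝ V)) ℝ V) (l : Fin (Module.finrank ℝ V) → ℝ),
      IsEigenbasis T u l :=
  ⟨hT.eigenvectorBasis rfl, hT.eigenvalues rfl, hT.apply_eigenvectorBasis rfl⟩

namespace IsEigenbasis

variable {T : V →L[ℝ] V} {u : OrthonormalBasis ι ℝ V} {l : ι → ℝ} (h : IsEigenbasis T u l)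
include h

theorem opTrace_mul (A : V →L[ℝ] V) : opTrace (A * T) = ∑ i, l i * ⟪u i, A (u i)⟫ := by
  simp only [opTrace_eq_sum_inner u, mul_apply_eq_comp, h _, map_smul,
    inner_smul_right]

theorem opTrace_eq_sum : opTrace T = ∑ i, l i := by
  simpa using h.opTrace_mul 1

theorem norm_pow_le_opTrace_pow {p : ℕ} (hp : p ≠ 0) : ‖T‖ ^ (2 * p) ≤ opTrace (T ^ (2 * p)) := by
  rw [(h.pow _).opTrace_eq_sum]
  have hnonneg (i : ι) : 0 ≤ l i ^ (2 * p) := (even_two_mul p).pow_nonneg _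
  rcases isEmpty_or_nonempty ι with hι | hι
  · simp [le_antisymm (h.norm_le le_rfl fun i ↦ hι.elim i) (norm_nonneg T), hp]
  · obtain ⟨i, hi⟩ := Finite.exists_max fun i ↦ |l i|
    calc ‖T‖ ^ (2 * p) ≤ |l i| ^ (2 * p) := by
          gcongr
          exact h.norm_le (abs_nonneg _) hi
      _ = l i ^ (2 * p) := (even_two_mul p).pow_abs _
      _ ≤ ∑ i, l i ^ (2 * p) :=
          Finset.single_le_sum (f := fun i ↦ l i ^ (2 * p)) (fun i _ ↦ hnonneg i)
            (Finset.mem_univ i)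

end IsEigenbasis

theorem abs_opTrace_mul_pow_le {T : V →L[ℝ] V} (hT : (T : V →ₗ[ℝ] V).IsSymmetric)
    (P : V →L[ℝ] V) (q : ℕ) : |opTrace (P * T ^ (2 * q))| ≤ ‖P‖ * opTrace (T ^ (2 * q)) := by
  obtain ⟨u, l, h⟩ := exists_isEigenbasis hT
  rw [(h.pow _).opTrace_mul, (h.pow _).opTrace_eq_sum, Finset.mul_sum]
  refine (Finset.abs_sum_le_sum_abs _ _).trans (Finset.sum_le_sum fun i _ ↦ ?_)
  rw [abs_mul, abs_of_nonneg ((even_two_mul q).pow_nonneg _), mul_comm]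
  gcongr
  · exact (even_two_mul q).pow_nonneg _
  · calc |⟪u i, P (u i)⟫| ≤ ‖u i‖ * ‖P (u i)‖ := abs_real_inner_le_norm _ _
      _ ≤ ‖u i‖ * (‖P‖ * ‖u i‖) := by gcongr; exact P.le_opNorm _
      _ = ‖P‖ := by simp

theorem opTrace_pow_nonneg {T : V →L[ℝ] V} (hT : (T : V →ₗ[ℝ] V).IsSymmetric) (q : ℕ) :
    0 ≤ opTrace (T ^ (2 * q)) := by
  obtain ⟨u, l, h⟩ := exists_isEigenbasis hT
  rw [(h.pow _).opTrace_eq_sum]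
  exact Finset.sum_nonneg fun i _ ↦ (even_two_mul q).pow_nonneg _

end Spectral

section Pencil

variable {κ E V : Type*} [Fintype κ] [NormedAddCommGroup E] [InnerProductSpace ℝ E]
  [FiniteDimensional ℝ E] [NormedAddCommGroup V] [InnerProductSpace ℝ V]

/-- The vector of `E` representing the matrix coefficient `x ↦ ⟪y, X x w⟫` of a pencil `X`. -/
noncomputable def coeffVec (X : E →L[ℝ] V →L[ℝ] V) (y w : V) : E :=
  (InnerProductSpace.toDual ℝ E).symm (innerSL ℝ y ∘L X.flip w)

section coeffVec

variable (X : E →L[ℝ] V →L[ℝ] V)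

theorem inner_coeffVec (y w : V) (x : E) : ⟪coeffVec X y w, x⟫ = ⟪y, X x w⟫ := by
  simp [coeffVec]

theorem coeffVec_smul (c : ℝ) (y w : V) : coeffVec X y (c • w) = c • coeffVec X y w :=
  ext_inner_right ℝ fun x ↦ by simp only [inner_coeffVec, map_smul, inner_smul_right,
    real_inner_smul_left]

theorem sum_inner_mul_inner_eq (b : OrthonormalBasis κ ℝ E) (y w y' w' : V) :
    ∑ j, ⟪y, X (b j) w⟫ * ⟪y', X (b j) w'⟫ = ⟪coeffVec X y w, coeffVec X y' w'⟫ := by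
  rw [← b.sum_inner_mul_inner]
  simp only [real_inner_comm _ (b _), inner_coeffVec]

theorem sum_norm_sq_coeffVec_left (b : OrthonormalBasis κ ℝ E) (y w : V) :
    ∑ j, ⟪y, X (b j) w⟫ ^ 2 = ‖coeffVec X y w‖ ^ 2 := by
  simp only [← inner_coeffVec, b.sum_sq_inner_left]

variable {X}

theorem coeffVec_comm (hX : ∀ x, (X x : V →ₗ[ℝ] V).IsSymmetric) (y w : V) :
    coeffVec X y w = coeffVec X w y := by
  refine ext_inner_right ℝ fun x ↦ ?_
  rw [inner_coeffVec, inner_coeffVec, real_inner_comm]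
  exact hX x w y

theorem sum_norm_sq_coeffVec {ι : Type*} [Fintype ι] (hX : ∀ x, (X x : V →ₗ[ℝ] V).IsSymmetric)
    (b : OrthonormalBasis κ ℝ E) (u : OrthonormalBasis ι ℝ V) (y : V) :
    ∑ k, ‖coeffVec X y (u k)‖ ^ 2 = ∑ j, ‖X (b j) y‖ ^ 2 := by
  simp_rw [← sum_norm_sq_coeffVec_left X b]
  rw [Finset.sum_comm]
  congr! 1 with j
  rw [← u.sum_sq_inner_left]
  congr! 2 with k
  exact (hX _ _ _).symm

end coeffVec

/-- The sum `∑ᵢⱼ Bᵢ T₁ Bⱼ T₂ Bᵢ T₃ Bⱼ T₄` over the coefficients `Bⱼ` of the pencil `X`. It vanishes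
for a free semicircular family, and so measures how far the Gaussian pencil is from free. -/
noncomputable def crossing (X : E →L[ℝ] V →L[ℝ] V) (T₁ T₂ T₃ T₄ : V →L[ℝ] V) : V →L[ℝ] V :=
  ∑ i, ∑ j, X (stdOrthonormalBasis ℝ E i) * T₁ * X (stdOrthonormalBasis ℝ E j) * T₂ *
    X (stdOrthonormalBasis ℝ E i) * T₃ * X (stdOrthonormalBasis ℝ E j) * T₄

theorem inner_crossing (X : E →L[ℝ] V →L[ℝ] V) {T₁ T₂ T₃ : V →L[ℝ] V}
    {u₁ u₂ u₃ : OrthonormalBasis κ ℝ V}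
    {l₁ l₂ l₃ : κ → ℝ} (h₁ : IsEigenbasis T₁ u₁ l₁) (h₂ : IsEigenbasis T₂ u₂ l₂)
    (h₃ : IsEigenbasis T₃ u₃ l₃) (T₄ : V →L[ℝ] V) (y w : V) :
    ⟪y, crossing X T₁ T₂ T₃ T₄ w⟫ = ∑ k, ∑ l, ∑ m, l₁ k * l₂ l * l₃ m *
      (⟪coeffVec X y (u₁ k), coeffVec X (u₂ l) (u₃ m)⟫ *
        ⟪coeffVec X (u₁ k) (u₂ l), coeffVec X (u₃ m) (T₄ w)⟫) := by
  set b := stdOrthonormalBasis ℝ E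
  calc ⟪y, crossing X T₁ T₂ T₃ T₄ w⟫
      = ∑ i, ∑ j, ∑ k, ∑ l, ∑ m, l₁ k * l₂ l * l₃ m *
          (⟪y, X (b i) (u₁ k)⟫ * ⟪u₂ l, X (b i) (u₃ m)⟫ *
            (⟪u₁ k, X (b j) (u₂ l)⟫ * ⟪u₃ m, X (b j) (T₄ w)⟫)) := by
        simp only [crossing, sum_apply, inner_sum, mul_apply_eq_comp, h₁.inner_comp, h₂.inner_comp,
          h₃.inner_comp, Finset.mul_sum]
        congr! 5
        ring
    _ = ∑ k, ∑ l, ∑ m, l₁ k * l₂ l * l₃ m * ∑ i, ∑ j,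
          (⟪y, X (b i) (u₁ k)⟫ * ⟪u₂ l, X (b i) (u₃ m)⟫ *
            (⟪u₁ k, X (b j) (u₂ l)⟫ * ⟪u₃ m, X (b j) (T₄ w)⟫)) := by
        simp only [Finset.mul_sum]
        exact Finset.sum_comm_cycle.trans <| Finset.sum_congr rfl fun k _ ↦
          Finset.sum_comm_cycle.trans <| Finset.sum_congr rfl fun l _ ↦ Finset.sum_comm_cycle
    _ = _ := by simp only [← Finset.sum_mul_sum, sum_inner_mul_inner_eq]

/-- The absolute value of the coefficient of four vectors in the trace of `crossing X`. -/
noncomputable def crossingWeight (X : E →L[ℝ] V →L[ℝ] V) (a b c d : V) : ℝ :=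
  |⟪coeffVec X d a, coeffVec X b c⟫ * ⟪coeffVec X a b, coeffVec X c d⟫|

theorem crossingWeight_rotate (X : E →L[ℝ] V →L[ℝ] V) (a b c d : V) :
    crossingWeight X a b c d = crossingWeight X b c d a := by
  rw [crossingWeight, crossingWeight, real_inner_comm, mul_comm]

variable [FiniteDimensional ℝ V]

/-- `X` is a pencil of symmetric operators `∑ xⱼ Bⱼ` whose variance is controlled by
`‖∑ Bⱼ²‖ ≤ s` and whose coefficients are controlled by `‖∑ xⱼ Bⱼ‖_F² ≤ v ‖x‖²`. -/
structure PencilBound (X : E →L[ℝ] V →L[ℝ] V) (s v : ℝ) : Prop where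
  isSymmetric x : (X x : V →ₗ[ℝ] V).IsSymmetric
  sum_norm_sq_le y : ∑ j, ‖X (stdOrthonormalBasis ℝ E j) y‖ ^ 2 ≤ s * ‖y‖ ^ 2
  opTrace_mul_self_le x : opTrace (X x * X x) ≤ v * ‖x‖ ^ 2
  s_nonneg : 0 ≤ s
  v_nonneg : 0 ≤ v

namespace PencilBound

variable {X : E →L[ℝ] V →L[ℝ] V} {s v : ℝ} (h : PencilBound X s v)
include h

theorem sum_norm_sq_coeffVec_le (u : OrthonormalBasis κ ℝ V) (y : V) :
    ∑ k, ‖coeffVec X y (u k)‖ ^ 2 ≤ s * ‖y‖ ^ 2 :=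
  (sum_norm_sq_coeffVec h.isSymmetric _ u y).trans_le (h.sum_norm_sq_le y)

theorem sum_sq_inner_coeffVec_le (u₁ u₂ : OrthonormalBasis κ ℝ V) (x : E) :
    ∑ k, ∑ l, ⟪x, coeffVec X (u₁ k) (u₂ l)⟫ ^ 2 ≤ v * ‖x‖ ^ 2 := by
  refine le_of_eq_of_le ?_ (h.opTrace_mul_self_le x)
  rw [opTrace_mul_self_eq_sum_norm_sq u₂ (h.isSymmetric x), Finset.sum_comm]
  simp only [real_inner_comm _ x, inner_coeffVec, u₁.sum_sq_inner_right]

theorem sum_sq_inner_coeffVec_coeffVec_le (u₁ u₂ u₃ : OrthonormalBasis κ ℝ V) (y : V) :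
    ∑ k, ∑ l, ∑ m, ⟪coeffVec X y (u₁ k), coeffVec X (u₂ l) (u₃ m)⟫ ^ 2 ≤ s * v * ‖y‖ ^ 2 :=
  calc _ ≤ ∑ k, v * ‖coeffVec X y (u₁ k)‖ ^ 2 :=
        Finset.sum_le_sum fun k _ ↦ h.sum_sq_inner_coeffVec_le u₂ u₃ _
    _ = v * ∑ k, ‖coeffVec X y (u₁ k)‖ ^ 2 := Finset.mul_sum .. |>.symm
    _ ≤ v * (s * ‖y‖ ^ 2) := by gcongr; exacts [h.v_nonneg, h.sum_norm_sq_coeffVec_le u₁ y]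
    _ = s * v * ‖y‖ ^ 2 := by ring

theorem sum_abs_inner_mul_inner_le (u₁ u₂ u₃ : OrthonormalBasis κ ℝ V) (y w : V) :
    ∑ k, ∑ l, ∑ m, |⟪coeffVec X y (u₁ k), coeffVec X (u₂ l) (u₃ m)⟫ *
      ⟪coeffVec X (u₁ k) (u₂ l), coeffVec X (u₃ m) w⟫| ≤ s * v * (‖y‖ * ‖w‖) := by
  have hsv := mul_nonneg h.s_nonneg h.v_nonneg
  have hy := h.sum_sq_inner_coeffVec_coeffVec_le u₁ u₂ u₃ y
  have hw : ∑ k, ∑ l, ∑ m, ⟪coeffVec X (u₁ k) (u₂ l), coeffVec X (u₃ m) w⟫ ^ 2 ≤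
      s * v * ‖w‖ ^ 2 := by
    refine le_of_eq_of_le ?_ (h.sum_sq_inner_coeffVec_coeffVec_le u₃ u₁ u₂ w)
    simp only [coeffVec_comm h.isSymmetric _ w, real_inner_comm (coeffVec X w _)]
    exact Finset.sum_comm_cycle
  simp only [← Fintype.sum_prod_type', abs_mul, ← sq_abs (inner ℝ _ _)] at hy hw ⊢
  calc _ ≤ _ := Real.sum_mul_le_sqrt_mul_sqrt _ _ _
    _ ≤ √(s * v * ‖y‖ ^ 2) * √(s * v * ‖w‖ ^ 2) := by gcongr
    _ = s * v * (‖y‖ * ‖w‖) := by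
        rw [Real.sqrt_mul hsv, Real.sqrt_mul hsv, Real.sqrt_sq (norm_nonneg y),
          Real.sqrt_sq (norm_nonneg w), mul_mul_mul_comm, Real.mul_self_sqrt hsv]

end PencilBound

namespace PencilBound

variable {X : E →L[ℝ] V →L[ℝ] V} {s v : ℝ} (h : PencilBound X s v)
include h

theorem norm_crossing_le {T₁ T₂ T₃ : V →L[ℝ] V} (h₁ : (T₁ : V →ₗ[ℝ] V).IsSymmetric)
    (h₂ : (T₂ : V →ₗ[ℝ] V).IsSymmetric) (h₃ : (T₃ : V →ₗ[ℝ] V).IsSymmetric) (T₄ : V →L[ℝ] V) :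
    ‖crossing X T₁ T₂ T₃ T₄‖ ≤ s * v * (‖T₁‖ * ‖T₂‖ * ‖T₃‖ * ‖T₄‖) := by
  have hsv := mul_nonneg h.s_nonneg h.v_nonneg
  obtain ⟨u₁, l₁, hu₁⟩ := exists_isEigenbasis h₁
  obtain ⟨u₂, l₂, hu₂⟩ := exists_isEigenbasis h₂
  obtain ⟨u₃, l₃, hu₃⟩ := exists_isEigenbasis h₃
  refine ContinuousLinearMap.opNorm_le_of_re_inner_le (𝕜 := ℝ) (by positivity) fun w y hw hy ↦ ?_
  rw [RCLike.re_to_real, real_inner_comm, inner_crossing X hu₁ hu₂ hu₃]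
  calc _ ≤ ∑ k, ∑ l, ∑ m, ‖T₁‖ * ‖T₂‖ * ‖T₃‖ *
        |⟪coeffVec X y (u₁ k), coeffVec X (u₂ l) (u₃ m)⟫ *
          ⟪coeffVec X (u₁ k) (u₂ l), coeffVec X (u₃ m) (T₄ w)⟫| := by
        refine Finset.sum_le_sum fun k _ ↦ Finset.sum_le_sum fun l _ ↦
          Finset.sum_le_sum fun m _ ↦ ?_
        refine (le_abs_self _).trans ?_
        rw [abs_mul (_ * _), abs_mul (_ * _), abs_mul (l₁ k)]
        gcongr
        exacts [hu₁.abs_le_norm k, hu₂.abs_le_norm l, hu₃.abs_le_norm m]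
    _ ≤ ‖T₁‖ * ‖T₂‖ * ‖T₃‖ * (s * v * (‖y‖ * ‖T₄ w‖)) := by
        simp only [← Finset.mul_sum]
        gcongr
        exact h.sum_abs_inner_mul_inner_le u₁ u₂ u₃ y (T₄ w)
    _ ≤ ‖T₁‖ * ‖T₂‖ * ‖T₃‖ * (s * v * (1 * (‖T₄‖ * 1))) := by
        gcongr
        exacts [hy.le, hw ▸ T₄.le_opNorm w]
    _ = _ := by ring

end PencilBound

theorem abs_pow_mul_pow_mul_pow_mul_pow_le {N : ℕ} (hN : Even N) (x : Fin 4 → ℝ) (a : Fin 4 → ℕ)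
    (ha : ∑ i, a i = N) : |∏ i, x i ^ a i| ≤ ∑ i, x i ^ N := by
  obtain ⟨j, hj⟩ := Finite.exists_max fun i ↦ |x i|
  calc |∏ i, x i ^ a i| = ∏ i, |x i| ^ a i := by simp only [Finset.abs_prod, abs_pow]
    _ ≤ ∏ i, |x j| ^ a i :=
        Finset.prod_le_prod (fun _ _ ↦ by positivity) fun i _ ↦
          pow_le_pow_left₀ (abs_nonneg _) (hj i) _
    _ = x j ^ N := by rw [Finset.prod_pow_eq_pow_sum, ha, hN.pow_abs]
    _ ≤ ∑ i, x i ^ N :=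
        Finset.single_le_sum (f := fun i ↦ x i ^ N) (fun i _ ↦ hN.pow_nonneg _) (Finset.mem_univ j)

namespace PencilBound

variable {X : E →L[ℝ] V →L[ℝ] V} {s v : ℝ} (h : PencilBound X s v)
include h

theorem sum_crossingWeight_mul_le (u₁ u₂ u₃ u₄ : OrthonormalBasis κ ℝ V) {c : κ → ℝ}
    (hc : ∀ k, 0 ≤ c k) :
    ∑ n, ∑ k, ∑ l, ∑ m, crossingWeight X (u₁ k) (u₂ l) (u₃ m) (u₄ n) * c n ≤
      s * v * ∑ n, c n := by
  simp only [← Finset.sum_mul, Finset.mul_sum (f := c)]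
  gcongr with n
  · exact hc n
  · simpa only [u₄.norm_eq_one, mul_one, crossingWeight] using
      h.sum_abs_inner_mul_inner_le u₁ u₂ u₃ (u₄ n) (u₄ n)

theorem sum_crossingWeight_mul_add_le (u : Fin 4 → OrthonormalBasis κ ℝ V) {c : Fin 4 → κ → ℝ}
    (hc : ∀ i k, 0 ≤ c i k) :
    ∑ n, ∑ k, ∑ l, ∑ m, crossingWeight X (u 0 k) (u 1 l) (u 2 m) (u 3 n) *
      (c 0 k + c 1 l + c 2 m + c 3 n) ≤ s * v * ∑ i, ∑ k, c i k := by
  have hrot (f : κ → κ → κ → κ → ℝ) :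
      ∑ n, ∑ k, ∑ l, ∑ m, f n k l m = ∑ k, ∑ l, ∑ m, ∑ n, f n k l m :=
    Finset.sum_comm.trans <| Finset.sum_congr rfl fun k _ ↦ Finset.sum_comm.trans <|
      Finset.sum_congr rfl fun l _ ↦ Finset.sum_comm
  have h₀ := h.sum_crossingWeight_mul_le (u 1) (u 2) (u 3) (u 0) (hc 0)
  have h₁ := h.sum_crossingWeight_mul_le (u 2) (u 3) (u 0) (u 1) (hc 1)
  have h₂ := h.sum_crossingWeight_mul_le (u 3) (u 0) (u 1) (u 2) (hc 2)
  have h₃ := h.sum_crossingWeight_mul_le (u 0) (u 1) (u 2) (u 3) (hc 3)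
  simp only [← crossingWeight_rotate X (u 0 _)] at h₀
  simp only [← crossingWeight_rotate X (u 1 _), ← crossingWeight_rotate X (u 0 _)] at h₁
  simp only [crossingWeight_rotate X (u 3 _)] at h₂
  simp only [mul_add, Finset.sum_add_distrib, Fin.sum_univ_four]
  rw [hrot fun n k l m ↦ _ * c 0 k, hrot fun n k l m ↦ _ * c 1 l, hrot fun k l m n ↦ _ * c 1 l,
    ← hrot fun m n k l ↦ _ * c 2 m]
  linarith

theorem abs_opTrace_crossing_pow_le {S : Fin 4 → V →L[ℝ] V}
    (hS : ∀ i, (S i : V →ₗ[ℝ] V).IsSymmetric) {N : ℕ} (hN : Even N) (a : Fin 4 → ℕ)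
    (ha : ∑ i, a i = N) :
    |opTrace (crossing X (S 0 ^ a 0) (S 1 ^ a 1) (S 2 ^ a 2) (S 3 ^ a 3))| ≤
      s * v * ∑ i, opTrace (S i ^ N) := by
  choose u l hu using fun i ↦ exists_isEigenbasis (hS i)
  simp only [((hu _).pow N).opTrace_eq_sum]
  refine le_trans ?_ (h.sum_crossingWeight_mul_add_le u fun i k ↦ hN.pow_nonneg (l i k))
  simp only [opTrace_eq_sum_inner (u 3),
    inner_crossing X ((hu 0).pow (a 0)) ((hu 1).pow (a 1)) ((hu 2).pow (a 2))]
  refine (Finset.abs_sum_le_sum_abs _ _).trans (Finset.sum_le_sum fun n _ ↦ ?_)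
  refine (Finset.abs_sum_le_sum_abs _ _).trans (Finset.sum_le_sum fun k _ ↦ ?_)
  refine (Finset.abs_sum_le_sum_abs _ _).trans (Finset.sum_le_sum fun q _ ↦ ?_)
  refine (Finset.abs_sum_le_sum_abs _ _).trans (Finset.sum_le_sum fun m _ ↦ ?_)
  have hmono := abs_pow_mul_pow_mul_pow_mul_pow_le hN ![l 0 k, l 1 q, l 2 m, l 3 n] a ha
  simp only [Fin.prod_univ_four, Fin.sum_univ_four, Matrix.cons_val] at hmono
  rw [(hu 3).pow (a 3) n, coeffVec_smul, inner_smul_right, crossingWeight]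
  calc _ = |⟪coeffVec X (u 3 n) (u 0 k), coeffVec X (u 1 q) (u 2 m)⟫ *
          ⟪coeffVec X (u 0 k) (u 1 q), coeffVec X (u 2 m) (u 3 n)⟫| *
            |l 0 k ^ a 0 * l 1 q ^ a 1 * l 2 m ^ a 2 * l 3 n ^ a 3| := by
        rw [← abs_mul]
        ring_nf
    _ ≤ _ := by gcongr

end PencilBound
end Pencil

section CovMap

variable {ι E V : Type*} [Fintype ι] [NormedAddCommGroup E] [InnerProductSpace ℝ E]
  [FiniteDimensional ℝ E] [NormedAddCommGroup V] [InnerProductSpace ℝ V]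

/-- The covariance map `P ↦ ∑ⱼ Bⱼ P Bⱼ` of a pencil `∑ xⱼ Bⱼ`, i.e. `P ↦ 𝔼 (X g) P (X g)`. -/
noncomputable def covMap (X : E →L[ℝ] V →L[ℝ] V) : (V →L[ℝ] V) →L[ℝ] (V →L[ℝ] V) :=
  ∑ j, ContinuousLinearMap.mulLeftRight ℝ _ (X (stdOrthonormalBasis ℝ E j))
    (X (stdOrthonormalBasis ℝ E j))

variable (X : E →L[ℝ] V →L[ℝ] V)

theorem covMap_apply (P : V →L[ℝ] V) :
    covMap X P = ∑ j, X (stdOrthonormalBasis ℝ E j) * P * X (stdOrthonormalBasis ℝ E j) := by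
  simp only [covMap, sum_apply, ContinuousLinearMap.mulLeftRight_apply]

variable [FiniteDimensional ℝ V]

theorem opTrace_covMap_mul_comm (P Q : V →L[ℝ] V) :
    opTrace (covMap X P * Q) = opTrace (covMap X Q * P) := by
  simp only [covMap_apply, Finset.sum_mul, map_sum, mul_assoc]
  refine Finset.sum_congr rfl fun j _ ↦ ?_
  rw [opTrace_mul_comm, mul_assoc, mul_assoc, opTrace_mul_comm, mul_assoc, mul_assoc]

variable {X}

theorem opTrace_covMap_mul (hX : ∀ x, (X x : V →ₗ[ℝ] V).IsSymmetric) {T S : V →L[ℝ] V}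
    {u : OrthonormalBasis ι ℝ V} {l m : ι → ℝ} (hT : IsEigenbasis T u l)
    (hS : IsEigenbasis S u m) :
    opTrace (covMap X T * S) = ∑ a, ∑ b, l a * m b * ‖coeffVec X (u a) (u b)‖ ^ 2 := by
  have hsymm (x : E) (a b : ι) : ⟪u b, X x (u a)⟫ = ⟪u a, X x (u b)⟫ := by
    rw [real_inner_comm]
    exact hX x _ _
  simp only [hS.opTrace_mul, covMap_apply, sum_apply, inner_sum, mul_apply_eq_comp,
    hT.inner_comp, hsymm, ← sq, ← sum_norm_sq_coeffVec_left X (stdOrthonormalBasis ℝ E),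
    Finset.mul_sum]
  rw [Finset.sum_comm_cycle]
  refine Finset.sum_congr rfl fun a _ ↦ Finset.sum_congr rfl fun b _ ↦
    Finset.sum_congr rfl fun j _ ↦ ?_
  rw [hsymm]
  ring

theorem PencilBound.norm_covMap_apply_le {s v : ℝ} (h : PencilBound X s v) (P : V →L[ℝ] V) :
    ‖covMap X P‖ ≤ s * ‖P‖ := by
  have hs := h.s_nonneg
  refine ContinuousLinearMap.opNorm_le_of_re_inner_le (𝕜 := ℝ) (by positivity) fun w y hw hy ↦ ?_
  set b := stdOrthonormalBasis ℝ E
  have hsum {z : V} (hz : ‖z‖ = 1) : ∑ j, ‖X (b j) z‖ ^ 2 ≤ s := by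
    simpa [hz] using h.sum_norm_sq_le z
  calc ⟪covMap X P w, y⟫ = ∑ j, ⟪P (X (b j) w), X (b j) y⟫ := by
        simp only [covMap_apply, sum_apply, sum_inner, mul_apply_eq_comp]
        exact Finset.sum_congr rfl fun j _ ↦ h.isSymmetric _ _ _
    _ ≤ ∑ j, ‖P‖ * (‖X (b j) w‖ * ‖X (b j) y‖) := by
        refine Finset.sum_le_sum fun j _ ↦ (real_inner_le_norm _ _).trans ?_
        rw [← mul_assoc]
        gcongr
        exact P.le_opNorm _
    _ = ‖P‖ * ∑ j, ‖X (b j) w‖ * ‖X (b j) y‖ := Finset.mul_sum .. |>.symm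
    _ ≤ ‖P‖ * (√s * √s) := by
        gcongr
        refine (Real.sum_mul_le_sqrt_mul_sqrt _ _ _).trans ?_
        gcongr
        exacts [hsum hw, hsum hy]
    _ = s * ‖P‖ := by rw [Real.mul_self_sqrt hs, mul_comm]

end CovMap

section GaussianPowers

variable {E V : Type*} [NormedAddCommGroup E] [InnerProductSpace ℝ E]
  [NormedAddCommGroup V] [InnerProductSpace ℝ V]

theorem fderiv_const_add_clm_pow (M : V →L[ℝ] V) (X : E →L[ℝ] V →L[ℝ] V) (n : ℕ) (x w : E) :
    fderiv ℝ (fun x ↦ (M + X x) ^ n) x w =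
      ∑ a ∈ Finset.range n, (M + X x) ^ a * X w * (M + X x) ^ (n - 1 - a) := by
  rw [((X.hasFDerivAt.const_add M).fun_pow' n).fderiv, ← Finset.sum_range_reflect, sum_apply]
  refine Finset.sum_congr rfl fun a ha ↦ ?_
  have : n - 1 - (n - 1 - a) = a := by have := Finset.mem_range.1 ha; omega
  simp [this, mul_assoc]

variable [FiniteDimensional ℝ E] (X : E →L[ℝ] V →L[ℝ] V)

theorem sum_covMap_fderiv_mul_fderiv (k l : ℕ) (x y : E) :
    ∑ j, covMap X (fderiv ℝ (fun x ↦ X x ^ k) x (stdOrthonormalBasis ℝ E j)) *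
        fderiv ℝ (fun x ↦ X x ^ l) y (stdOrthonormalBasis ℝ E j) =
      ∑ a ∈ Finset.range k, ∑ c ∈ Finset.range l,
        crossing X (X x ^ a) (X x ^ (k - 1 - a)) (X y ^ c) (X y ^ (l - 1 - c)) := by
  have hpow (n : ℕ) (x w : E) := by simpa only [zero_add] using fderiv_const_add_clm_pow 0 X n x w
  simp only [hpow, covMap_apply, crossing, Finset.mul_sum, Finset.sum_mul, ← mul_assoc]
  rw [Finset.sum_comm, Finset.sum_comm (s := Finset.range k)]
  refine Finset.sum_congr rfl fun c _ ↦ ?_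
  rw [Finset.sum_comm_cycle]
  exact Finset.sum_congr rfl fun a _ ↦ Finset.sum_comm

variable [MeasurableSpace E] [BorelSpace E]

theorem integral_clm_pow_of_odd {n : ℕ} (hn : Odd n) : ∫ x, X x ^ n ∂stdGaussian E = 0 := by
  have hneg : ∫ x, X x ^ n ∂stdGaussian E = -∫ x, X x ^ n ∂stdGaussian E := by
    conv_lhs => rw [← stdGaussian_map (LinearIsometryEquiv.neg ℝ (E := E)),
      integral_map (by fun_prop) (by fun_prop)]
    simp [hn.neg_pow, integral_neg]
  have : IsAddTorsionFree (V →L[ℝ] V) := .of_isTorsionFree ℝ _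
  exact self_eq_neg.1 hneg

variable [FiniteDimensional ℝ V]

theorem integral_mul_const_add_clm_pow (M : V →L[ℝ] V) (n : ℕ) :
    ∫ x, X x * (M + X x) ^ n ∂stdGaussian E = ∑ a ∈ Finset.range n,
      ∫ x, covMap X ((M + X x) ^ a) * (M + X x) ^ (n - 1 - a) ∂stdGaussian E := by
  rw [← integral_finsetSum _ fun a _ ↦ integrable_of_hasTemperateGrowth (by fun_prop)]
  refine (integral_bilin_apply_clm_stdGaussian (ContinuousLinearMap.mul ℝ (V →L[ℝ] V)).flip
    (f := fun x ↦ (M + X x) ^ n) (by fun_prop) X).trans (integral_congr_ae (.of_forall fun x ↦ ?_))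
  simp only [ContinuousLinearMap.flip_apply, ContinuousLinearMap.mul_apply',
    fderiv_const_add_clm_pow, covMap_apply, Finset.mul_sum, Finset.sum_mul, mul_assoc]
  exact Finset.sum_comm

theorem integral_clm_pow_succ (n : ℕ) :
    ∫ x, X x ^ (n + 1) ∂stdGaussian E = ∑ a ∈ Finset.range n,
      ∫ x, covMap X (X x ^ a) * X x ^ (n - 1 - a) ∂stdGaussian E := by
  simpa only [zero_add, ← pow_succ'] using integral_mul_const_add_clm_pow X 0 n

end GaussianPowers

section Moments

theorem pow_mul_pow_le_one_add_pow_add_pow {x y : ℝ} (hx : 0 ≤ x) (hy : 0 ≤ y) {a b n : ℕ}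
    (hab : a + b ≤ n) : x ^ a * y ^ b ≤ 1 + x ^ n + y ^ n := by
  have hM : max 1 (max x y) ^ n ≤ 1 + x ^ n + y ^ n := by
    have := pow_nonneg hx n
    have := pow_nonneg hy n
    rcases max_choice x y with h | h <;> rcases max_choice 1 (max x y) with h' | h' <;>
      rw [h'] <;> (try rw [h]) <;> linarith [one_pow (M := ℝ) n]
  calc x ^ a * y ^ b ≤ max 1 (max x y) ^ a * max 1 (max x y) ^ b := by gcongr <;> simp
    _ = max 1 (max x y) ^ (a + b) := (pow_add _ _ _).symm
    _ ≤ max 1 (max x y) ^ n := by gcongr; simp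
    _ ≤ 1 + x ^ n + y ^ n := hM

variable {E V : Type*} [NormedAddCommGroup E] [InnerProductSpace ℝ E] [FiniteDimensional ℝ E]
  [NormedAddCommGroup V] [InnerProductSpace ℝ V]

theorem isSymmetric_pow {T : V →L[ℝ] V} (hT : (T : V →ₗ[ℝ] V).IsSymmetric) (n : ℕ) :
    ((T ^ n : V →L[ℝ] V) : V →ₗ[ℝ] V).IsSymmetric := by
  rw [ContinuousLinearMap.toLinearMap_pow]
  exact hT.pow n

theorem opNorm_pow_le (T : V →L[ℝ] V) (n : ℕ) : ‖T ^ n‖ ≤ ‖T‖ ^ n := by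
  cases n with
  | zero => exact ContinuousLinearMap.norm_id_le
  | succ n => exact norm_pow_le' T n.succ_pos

variable [FiniteDimensional ℝ V] {X : E →L[ℝ] V →L[ℝ] V} {s v : ℝ}

theorem PencilBound.abs_opTrace_sum_crossing_le (h : PencilBound X s v) {N : ℕ} (hN : Even N)
    {k l : ℕ} (hkl : k + l = N + 2) (x y : E) :
    |opTrace (∑ a ∈ Finset.range k, ∑ c ∈ Finset.range l,
        crossing X (X x ^ a) (X x ^ (k - 1 - a)) (X y ^ c) (X y ^ (l - 1 - c)))| ≤
      k * l * (s * v) * (2 * opTrace (X x ^ N)) + k * l * (s * v) * (2 * opTrace (X y ^ N)) := by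
  have hterm {a c : ℕ} (ha : a ∈ Finset.range k) (hc : c ∈ Finset.range l) :
      |opTrace (crossing X (X x ^ a) (X x ^ (k - 1 - a)) (X y ^ c) (X y ^ (l - 1 - c)))| ≤
        s * v * (2 * opTrace (X x ^ N) + 2 * opTrace (X y ^ N)) := by
    have hsymm : ∀ i, (![X x, X x, X y, X y] i : V →ₗ[ℝ] V).IsSymmetric :=
      Fin.forall_fin_succ.2 ⟨h.isSymmetric x, by simp [Fin.forall_fin_succ, h.isSymmetric]⟩
    refine (h.abs_opTrace_crossing_pow_le hsymm hN ![a, k - 1 - a, c, l - 1 - c] ?_).trans_eq ?_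
    · simp only [Finset.mem_range] at ha hc
      simp [Fin.sum_univ_four]
      omega
    · simp only [Fin.sum_univ_four, Matrix.cons_val]
      ring
  simp only [map_sum]
  refine (Finset.abs_sum_le_sum_abs _ _).trans <| (Finset.sum_le_sum fun a ha ↦
    (Finset.abs_sum_le_sum_abs _ _).trans <| Finset.sum_le_sum fun c hc ↦ hterm ha hc).trans_eq ?_
  simp only [Finset.sum_const, Finset.card_range, nsmul_eq_mul]
  ring

theorem PencilBound.norm_sum_crossing_le (h : PencilBound X s v) {p k l : ℕ} (hp : p ≠ 0)
    (hkl : k + l ≤ 2 * p + 2) (x y : E) :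
    ‖∑ a ∈ Finset.range k, ∑ c ∈ Finset.range l,
        crossing X (X x ^ a) (X x ^ (k - 1 - a)) (X y ^ c) (X y ^ (l - 1 - c))‖ ≤
      k * l * (s * v) * (1 / 2 + opTrace (X x ^ (2 * p))) +
        k * l * (s * v) * (1 / 2 + opTrace (X y ^ (2 * p))) := by
  have hsv := mul_nonneg h.s_nonneg h.v_nonneg
  have htr (x : E) : ‖X x‖ ^ (2 * p) ≤ opTrace (X x ^ (2 * p)) := by
    obtain ⟨u, l, hu⟩ := exists_isEigenbasis (h.isSymmetric x)
    exact hu.norm_pow_le_opTrace_pow hp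
  have hterm {a c : ℕ} (ha : a ∈ Finset.range k) (hc : c ∈ Finset.range l) :
      ‖crossing X (X x ^ a) (X x ^ (k - 1 - a)) (X y ^ c) (X y ^ (l - 1 - c))‖ ≤
        s * v * (1 + opTrace (X x ^ (2 * p)) + opTrace (X y ^ (2 * p))) := by
    simp only [Finset.mem_range] at ha hc
    refine (h.norm_crossing_le (isSymmetric_pow (h.isSymmetric x) _)
      (isSymmetric_pow (h.isSymmetric x) _) (isSymmetric_pow (h.isSymmetric y) _) _).trans ?_
    gcongr
    calc ‖X x ^ a‖ * ‖X x ^ (k - 1 - a)‖ * ‖X y ^ c‖ * ‖X y ^ (l - 1 - c)‖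
        ≤ ‖X x‖ ^ a * ‖X x‖ ^ (k - 1 - a) * ‖X y‖ ^ c * ‖X y‖ ^ (l - 1 - c) := by
          gcongr <;> exact opNorm_pow_le _ _
      _ = ‖X x‖ ^ (k - 1) * ‖X y‖ ^ (l - 1) := by
          rw [← pow_add, mul_assoc, ← pow_add]
          congr 2 <;> omega
      _ ≤ 1 + ‖X x‖ ^ (2 * p) + ‖X y‖ ^ (2 * p) :=
          pow_mul_pow_le_one_add_pow_add_pow (norm_nonneg _) (norm_nonneg _) (by omega)
      _ ≤ 1 + opTrace (X x ^ (2 * p)) + opTrace (X y ^ (2 * p)) := by gcongr <;> exact htr _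
  refine (norm_sum_le _ _).trans <| (Finset.sum_le_sum fun a ha ↦
    (norm_sum_le _ _).trans <| Finset.sum_le_sum fun c hc ↦ hterm ha hc).trans_eq ?_
  simp only [Finset.sum_const, Finset.card_range, nsmul_eq_mul]
  ring

variable [MeasurableSpace E] [BorelSpace E]

/-- The trace moment `𝔼 tr (X g)ⁿ` of a pencil `X` at a standard Gaussian vector `g`. -/
noncomputable def traceMoment (X : E →L[ℝ] V →L[ℝ] V) (n : ℕ) : ℝ :=
  ∫ x, opTrace (X x ^ n) ∂stdGaussian E

theorem PencilBound.norm_integral_covMap_pow_mul_pow_sub_le (h : PencilBound X s v) {p k l : ℕ}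
    (hp : p ≠ 0) (hkl : k + l ≤ 2 * p + 2) :
    ‖∫ x, covMap X (X x ^ k) * X x ^ l ∂stdGaussian E -
        covMap X (∫ x, X x ^ k ∂stdGaussian E) * ∫ x, X x ^ l ∂stdGaussian E‖ ≤
      Real.pi * (k * l * (s * v) * (1 / 2 + traceMoment X (2 * p))) := by
  refine (norm_integral_bilin_sub_le (E := E) (ContinuousLinearMap.mul ℝ (V →L[ℝ] V) ∘L covMap X)
    (f := fun x ↦ X x ^ k) (g := fun x ↦ X x ^ l)
    (h := fun x ↦ k * l * (s * v) * (1 / 2 + opTrace (X x ^ (2 * p)))) (by fun_prop) (by fun_prop)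
    (by fun_prop) fun x y ↦ ?_).trans_eq ?_
  · simpa only [ContinuousLinearMap.comp_apply, ContinuousLinearMap.mul_apply',
      sum_covMap_fderiv_mul_fderiv] using h.norm_sum_crossing_le hp hkl x y
  · rw [integral_const_mul, integral_add (integrable_const _)
      (integrable_of_hasTemperateGrowth (by fun_prop))]
    simp [traceMoment]

theorem PencilBound.abs_integral_opTrace_covMap_pow_mul_pow_sub_le (h : PencilBound X s v)
    {N k l : ℕ} (hN : Even N) (hkl : k + l = N + 2) :
    |∫ x, opTrace (covMap X (X x ^ k) * X x ^ l) ∂stdGaussian E -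
        opTrace (covMap X (∫ x, X x ^ k ∂stdGaussian E) * ∫ x, X x ^ l ∂stdGaussian E)| ≤
      Real.pi * (k * l * (s * v) * (2 * traceMoment X N)) := by
  refine (norm_integral_bilin_sub_le (E := E)
    (ContinuousLinearMap.compL ℝ (V →L[ℝ] V) _ _ opTrace ∘L
      ContinuousLinearMap.mul ℝ (V →L[ℝ] V) ∘L covMap X)
    (f := fun x ↦ X x ^ k) (g := fun x ↦ X x ^ l)
    (h := fun x ↦ k * l * (s * v) * (2 * opTrace (X x ^ N))) (by fun_prop) (by fun_prop)
    (by fun_prop) fun x y ↦ ?_).trans_eq ?_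
  · simpa only [Real.norm_eq_abs, ContinuousLinearMap.comp_apply, ContinuousLinearMap.compL_apply,
      ContinuousLinearMap.mul_apply', ← map_sum,
      sum_covMap_fderiv_mul_fderiv] using h.abs_opTrace_sum_crossing_le hN hkl x y
  · simp only [integral_const_mul, traceMoment]

end Moments

section MomentBound

theorem sum_range_two_mul_add_one {M : Type*} [AddCommMonoid M] (f : ℕ → M) (m : ℕ) :
    ∑ a ∈ Finset.range (2 * m + 1), f a =
      ∑ i ∈ Finset.range (m + 1), f (2 * i) + ∑ i ∈ Finset.range m, f (2 * i + 1) := by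
  induction m with
  | zero => simp
  | succ m ih =>
    rw [show 2 * (m + 1) + 1 = 2 * m + 1 + 1 + 1 by ring, Finset.sum_range_succ,
      Finset.sum_range_succ, ih, Finset.sum_range_succ (fun i ↦ f (2 * i)) (m + 1),
      Finset.sum_range_succ (fun i ↦ f (2 * i + 1)) m, mul_add_one]
    abel

theorem catalan_le_four_pow (k : ℕ) : catalan k ≤ 4 ^ k :=
  (Nat.le_mul_of_pos_left _ k.succ_pos).trans <|
    (succ_mul_catalan_eq_centralBinom k).trans_le (Nat.centralBinom_le_four_pow k)

theorem one_le_catalan (k : ℕ) : 1 ≤ catalan k :=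
  Nat.pos_of_mul_pos_left ((succ_mul_catalan_eq_centralBinom k).symm ▸ k.centralBinom_pos)

theorem sum_catalan_mul_pow (x : ℝ) (m : ℕ) :
    ∑ i ∈ Finset.range (m + 1), (catalan i * x ^ i) * (catalan (m - i) * x ^ (m - i)) =
      catalan (m + 1) * x ^ m := by
  rw [catalan_succ, ← Finset.sum_range fun i ↦ catalan i * catalan (m - i), Nat.cast_sum,
    Finset.sum_mul]
  refine Finset.sum_congr rfl fun i hi ↦ ?_
  rw [← pow_mul_pow_sub x (Nat.lt_succ_iff.1 (Finset.mem_range.1 hi))]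
  push_cast
  ring

variable {E V : Type*} [NormedAddCommGroup E] [InnerProductSpace ℝ E] [FiniteDimensional ℝ E]
  [NormedAddCommGroup V] [InnerProductSpace ℝ V] [FiniteDimensional ℝ V]
  {X : E →L[ℝ] V →L[ℝ] V} {s v : ℝ}

theorem PencilBound.smul (h : PencilBound X s v) (c : ℝ) :
    PencilBound (c • X) (c ^ 2 * s) (c ^ 2 * v) where
  isSymmetric x := (h.isSymmetric x).smul (conj_trivial c)
  sum_norm_sq_le y := by
    simp only [smul_apply, norm_smul, mul_pow, Real.norm_eq_abs, sq_abs, ← Finset.mul_sum,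
      mul_assoc]
    gcongr
    exact h.sum_norm_sq_le y
  opTrace_mul_self_le x := by
    simp only [smul_apply, smul_mul_smul_comm, map_smul, smul_eq_mul, ← sq c, mul_assoc]
    gcongr
    exact h.opTrace_mul_self_le x
  s_nonneg := mul_nonneg (sq_nonneg c) h.s_nonneg
  v_nonneg := mul_nonneg (sq_nonneg c) h.v_nonneg

variable [MeasurableSpace E]

/-- The mixed trace moment `∑ⱼ 𝔼 tr (Bⱼ (X g)ᵏ Bⱼ (X g)ˡ)`. -/
noncomputable def covMoment (X : E →L[ℝ] V →L[ℝ] V) (k l : ℕ) : ℝ :=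
  ∫ x, opTrace (covMap X (X x ^ k) * X x ^ l) ∂stdGaussian E

theorem covMoment_comm (X : E →L[ℝ] V →L[ℝ] V) (k l : ℕ) : covMoment X k l = covMoment X l k := by
  simp only [covMoment, opTrace_covMap_mul_comm]

theorem traceMoment_smul (c : ℝ) (X : E →L[ℝ] V →L[ℝ] V) (n : ℕ) :
    traceMoment (c • X) n = c ^ n * traceMoment X n := by
  simp only [traceMoment, smul_apply, smul_pow, map_smul, smul_eq_mul, integral_const_mul]

theorem PencilBound.traceMoment_nonneg (h : PencilBound X s v) (q : ℕ) :
    0 ≤ traceMoment X (2 * q) :=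
  integral_nonneg fun x ↦ opTrace_pow_nonneg (h.isSymmetric x) q

variable [BorelSpace E]

theorem traceMoment_succ (X : E →L[ℝ] V →L[ℝ] V) (n : ℕ) :
    traceMoment X (n + 1) = ∑ a ∈ Finset.range n, covMoment X a (n - 1 - a) := by
  have hcomm {f : E → V →L[ℝ] V} (hf : f.HasTemperateGrowth) :
      ∫ x, opTrace (f x) ∂stdGaussian E = opTrace (∫ x, f x ∂stdGaussian E) :=
    opTrace.integral_comp_comm (integrable_of_hasTemperateGrowth hf)
  simp only [traceMoment, covMoment]
  rw [hcomm (by fun_prop), integral_clm_pow_succ, map_sum]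
  exact Finset.sum_congr rfl fun a _ ↦ (hcomm (by fun_prop)).symm

theorem cube_clog_eight_le {p : ℕ} (hp : 2 ≤ p) :
    Nat.clog 8 p ^ 3 ≤ p ∧ 8 ^ Nat.clog 8 p ≤ 8 * p := by
  obtain ⟨r, hr⟩ := Nat.exists_eq_add_of_lt (Nat.clog_pos (b := 8) (by norm_num) hp)
  rw [zero_add] at hr
  have hlt : 8 ^ r < p := by
    simpa [hr] using Nat.pow_pred_clog_lt_self (b := 8) (by norm_num) hp
  have hcube (r : ℕ) : (r + 1) ^ 3 ≤ 8 ^ r := by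
    induction r with
    | zero => simp
    | succ r ih =>
      calc (r + 1 + 1) ^ 3 ≤ (2 * (r + 1)) ^ 3 := by gcongr; omega
        _ = 8 * (r + 1) ^ 3 := by ring
        _ ≤ 8 ^ (r + 1) := by rw [pow_succ' 8 r]; gcongr
  rw [hr, pow_succ]
  exact ⟨(hcube r).trans hlt.le, by omega⟩

namespace PencilBound

theorem norm_integral_covMap_pow_mul_pow_le (h : PencilBound X s v) {p m a : ℕ} (hp : p ≠ 0)
    (hmom : traceMoment X (2 * p) ≤ 1) (hmp : m < p) (ha : a ≤ 2 * m) :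
    ‖∫ x, covMap X (X x ^ a) * X x ^ (2 * m - a) ∂stdGaussian E‖ ≤
      s * (‖∫ x, X x ^ a ∂stdGaussian E‖ * ‖∫ x, X x ^ (2 * m - a) ∂stdGaussian E‖) +
        6 * m ^ 2 * (s * v) := by
  have hsv := mul_nonneg h.s_nonneg h.v_nonneg
  have hcov := h.norm_integral_covMap_pow_mul_pow_sub_le hp
    (show a + (2 * m - a) ≤ 2 * p + 2 by omega)
  have hkl : (a : ℝ) * (2 * m - a : ℕ) ≤ m ^ 2 := by
    push_cast [ha]
    nlinarith [sq_nonneg ((a : ℝ) - m)]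
  have herr : Real.pi * (a * (2 * m - a : ℕ) * (s * v) * (1 / 2 + traceMoment X (2 * p))) ≤
      6 * m ^ 2 * (s * v) := by
    have := h.traceMoment_nonneg p
    calc Real.pi * (a * (2 * m - a : ℕ) * (s * v) * (1 / 2 + traceMoment X (2 * p)))
        ≤ 4 * (m ^ 2 * (s * v) * (1 / 2 + 1)) := by gcongr; exact Real.pi_le_four
      _ = 6 * m ^ 2 * (s * v) := by ring
  have hmain := (norm_mul_le (covMap X (∫ x, X x ^ a ∂stdGaussian E))
    (∫ x, X x ^ (2 * m - a) ∂stdGaussian E)).trans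
    (mul_le_mul_of_nonneg_right (h.norm_covMap_apply_le _) (norm_nonneg _))
  rw [mul_assoc] at hmain
  linarith [norm_le_norm_add_norm_sub' (∫ x, covMap X (X x ^ a) * X x ^ (2 * m - a) ∂stdGaussian E)
    (covMap X (∫ x, X x ^ a ∂stdGaussian E) * ∫ x, X x ^ (2 * m - a) ∂stdGaussian E)]

/- Up to crossing terms, the operators `𝔼 (X g)ⁿ` satisfy the Catalan recursion. -/
theorem norm_integral_pow_two_mul_succ_le (h : PencilBound X s v) {p m : ℕ} (hp : p ≠ 0)
    (hmom : traceMoment X (2 * p) ≤ 1) (hmp : m < p) :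
    ‖∫ x, X x ^ (2 * (m + 1)) ∂stdGaussian E‖ ≤
      s * ∑ i ∈ Finset.range (m + 1), ‖∫ x, X x ^ (2 * i) ∂stdGaussian E‖ *
        ‖∫ x, X x ^ (2 * (m - i)) ∂stdGaussian E‖ + (2 * m + 1) * (6 * m ^ 2 * (s * v)) := by
  set q : ℕ → ℝ := fun k ↦ ‖∫ x, X x ^ k ∂stdGaussian E‖
  have hodd (i : ℕ) : q (2 * i + 1) = 0 := by
    simp only [q, integral_clm_pow_of_odd X ⟨i, rfl⟩, norm_zero]
  calc ‖∫ x, X x ^ (2 * (m + 1)) ∂stdGaussian E‖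
      = ‖∑ a ∈ Finset.range (2 * m + 1),
          ∫ x, covMap X (X x ^ a) * X x ^ (2 * m - a) ∂stdGaussian E‖ := by
        rw [mul_add_one, integral_clm_pow_succ X (2 * m + 1), add_tsub_cancel_right]
    _ ≤ ∑ a ∈ Finset.range (2 * m + 1), (s * (q a * q (2 * m - a)) + 6 * m ^ 2 * (s * v)) :=
        (norm_sum_le _ _).trans <| Finset.sum_le_sum fun a ha ↦
          h.norm_integral_covMap_pow_mul_pow_le hp hmom hmp
            (Nat.lt_succ_iff.1 (Finset.mem_range.1 ha))
    _ = s * ∑ a ∈ Finset.range (2 * m + 1), q a * q (2 * m - a) +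
          (2 * m + 1) * (6 * m ^ 2 * (s * v)) := by
        rw [Finset.sum_add_distrib, Finset.sum_const, Finset.card_range, nsmul_eq_mul,
          Finset.mul_sum]
        push_cast
        rfl
    _ = s * ∑ i ∈ Finset.range (m + 1), q (2 * i) * q (2 * (m - i)) +
          (2 * m + 1) * (6 * m ^ 2 * (s * v)) := by
        simp [sum_range_two_mul_add_one, hodd, Nat.mul_sub]

theorem norm_integral_pow_two_mul_le (h : PencilBound X s v) {p r : ℕ} (hp : p ≠ 0)
    (hmom : traceMoment X (2 * p) ≤ 1) (hs : s ≤ 1 / 128) (hrp : r ≤ p)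
    (hr : 24 * r ^ 3 * (s * v) ≤ (1 / 64) ^ r) {k : ℕ} (hk : k ≤ r) :
    ‖∫ x, X x ^ (2 * k) ∂stdGaussian E‖ ≤ catalan k * (1 / 64) ^ k := by
  have hsv := mul_nonneg h.s_nonneg h.v_nonneg
  induction k using Nat.strong_induction_on with
  | _ k ih =>
  obtain rfl | ⟨m, rfl⟩ : k = 0 ∨ ∃ m, k = m + 1 := by cases k <;> simp
  · simpa using opNorm_pow_le (0 : V →L[ℝ] V) 0
  have hmain : s * ∑ i ∈ Finset.range (m + 1), ‖∫ x, X x ^ (2 * i) ∂stdGaussian E‖ *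
      ‖∫ x, X x ^ (2 * (m - i)) ∂stdGaussian E‖ ≤ catalan (m + 1) * (1 / 64) ^ (m + 1) / 2 := by
    calc s * ∑ i ∈ Finset.range (m + 1), ‖∫ x, X x ^ (2 * i) ∂stdGaussian E‖ *
          ‖∫ x, X x ^ (2 * (m - i)) ∂stdGaussian E‖
        ≤ 1 / 128 * ∑ i ∈ Finset.range (m + 1),
            ((catalan i : ℝ) * (1 / 64) ^ i) * (catalan (m - i) * (1 / 64) ^ (m - i)) := by
          gcongr with i hi <;>
            exact ih _ (by simp at hi; omega) (by simp at hi; omega)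
      _ = catalan (m + 1) * (1 / 64) ^ (m + 1) / 2 := by
          rw [sum_catalan_mul_pow]
          ring
  have herr : (2 * m + 1 : ℝ) * (6 * m ^ 2 * (s * v)) ≤
      catalan (m + 1) * (1 / 64) ^ (m + 1) / 2 := by
    calc (2 * m + 1 : ℝ) * (6 * m ^ 2 * (s * v))
        ≤ (2 * (m + 1 : ℕ)) * (6 * (m + 1 : ℕ) ^ 2 * (s * v)) := by push_cast; gcongr <;> linarith
      _ = 24 * ((m + 1 : ℕ) : ℝ) ^ 3 * (s * v) / 2 := by ring
      _ ≤ 24 * (r : ℝ) ^ 3 * (s * v) / 2 := by gcongr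
      _ ≤ (1 / 64) ^ r / 2 := by gcongr
      _ ≤ 1 * (1 / 64) ^ (m + 1) / 2 := by
          rw [one_mul]
          gcongr ?_ / 2
          exact pow_le_pow_of_le_one (by norm_num) (by norm_num) hk
      _ ≤ catalan (m + 1) * (1 / 64) ^ (m + 1) / 2 := by
          gcongr
          exact_mod_cast one_le_catalan _
  linarith [h.norm_integral_pow_two_mul_succ_le hp hmom (show m < p by omega)]

theorem traceMoment_two_mul_le (h : PencilBound X s v) {p q : ℕ} (hqp : q ≤ p)
    (hdim : Module.finrank ℝ V ≤ 2 ^ p) (hmom : traceMoment X (2 * p) ≤ 1) :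
    traceMoment X (2 * q) ≤ 2 ^ (p - q + 1) := by
  have hpow {t : ℝ} (ht : 0 ≤ t) : t ^ q ≤ 2 ^ (p - q) * t ^ p + (1 / 2) ^ q := by
    rcases le_total t (1 / 2) with h2 | h2
    · exact (pow_le_pow_left₀ ht h2 q).trans (le_add_of_nonneg_left (by positivity))
    · refine le_add_of_le_of_nonneg ?_ (by positivity)
      rw [← pow_mul_pow_sub t hqp, mul_left_comm, ← mul_pow]
      exact le_mul_of_one_le_right (by positivity) (one_le_pow₀ (by linarith))
  have htrace (x : E) : opTrace (X x ^ (2 * q)) ≤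
      2 ^ (p - q) * opTrace (X x ^ (2 * p)) + 2 ^ (p - q) := by
    obtain ⟨u, l, hu⟩ := exists_isEigenbasis (h.isSymmetric x)
    rw [(hu.pow _).opTrace_eq_sum, (hu.pow _).opTrace_eq_sum, Finset.mul_sum]
    calc ∑ i, l i ^ (2 * q) ≤ ∑ i, (2 ^ (p - q) * l i ^ (2 * p) + (1 / 2) ^ q) := by
          simp only [pow_mul]
          exact Finset.sum_le_sum fun i _ ↦ hpow (sq_nonneg _)
      _ = ∑ i, 2 ^ (p - q) * l i ^ (2 * p) + Module.finrank ℝ V * (1 / 2) ^ q := by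
          simp [Finset.sum_add_distrib]
      _ ≤ ∑ i, 2 ^ (p - q) * l i ^ (2 * p) + 2 ^ p * (1 / 2) ^ q := by
          gcongr
          exact_mod_cast hdim
      _ = ∑ i, 2 ^ (p - q) * l i ^ (2 * p) + 2 ^ (p - q) := by
          rw [← pow_mul_pow_sub (2 : ℝ) hqp, mul_right_comm, ← mul_pow]
          norm_num
  calc traceMoment X (2 * q)
      ≤ ∫ x, (2 ^ (p - q) * opTrace (X x ^ (2 * p)) + 2 ^ (p - q)) ∂stdGaussian E :=
        integral_mono (integrable_of_hasTemperateGrowth (by fun_prop))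
          (integrable_of_hasTemperateGrowth (by fun_prop)) htrace
    _ = 2 ^ (p - q) * traceMoment X (2 * p) + 2 ^ (p - q) := by
        rw [integral_add (integrable_of_hasTemperateGrowth (by fun_prop)) (integrable_const _),
          integral_const_mul]
        simp [traceMoment]
    _ ≤ 2 ^ (p - q) * 1 + 2 ^ (p - q) := by gcongr
    _ = 2 ^ (p - q + 1) := by ring

/- By the spectral theorem the mixed moment is a nonnegative combination of the monomials
`λᵏ μˡ + λˡ μᵏ`, which for even exponents with fixed sum increase with the spread of the
exponents. -/
theorem covMoment_le_of_le (h : PencilBound X s v) {r j m : ℕ} (hrj : r ≤ j) (hjm : j + r ≤ m) :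
    covMoment X (2 * j) (2 * (m - j)) ≤ covMoment X (2 * r) (2 * (m - r)) := by
  have hmono {x y : ℝ} (hx : 0 ≤ x) (hy : 0 ≤ y) :
      x ^ j * y ^ (m - j) + y ^ j * x ^ (m - j) ≤ x ^ r * y ^ (m - r) + y ^ r * x ^ (m - r) := by
    obtain ⟨a, rfl⟩ := Nat.exists_eq_add_of_le hrj
    obtain ⟨b, rfl⟩ := Nat.exists_eq_add_of_le hjm
    have hspread : 0 ≤ (x ^ a - y ^ a) * (x ^ b - y ^ b) := by
      rcases le_total x y with hxy | hxy
      · exact mul_nonneg_of_nonpos_of_nonpos (sub_nonpos.2 (by gcongr)) (sub_nonpos.2 (by gcongr))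
      · exact mul_nonneg (sub_nonneg.2 (by gcongr)) (sub_nonneg.2 (by gcongr))
    rw [show r + a + r + b - (r + a) = r + b by omega, show r + a + r + b - r = r + a + b by omega]
    have := mul_nonneg (mul_nonneg (pow_nonneg hx r) (pow_nonneg hy r)) hspread
    simp only [pow_add]
    linarith
  refine integral_mono (integrable_of_hasTemperateGrowth (by fun_prop))
    (integrable_of_hasTemperateGrowth (by fun_prop)) fun x ↦ ?_
  obtain ⟨u, l, hu⟩ := exists_isEigenbasis (h.isSymmetric x)
  have hsymm (k : ℕ) : 2 * opTrace (covMap X (X x ^ (2 * k)) * X x ^ (2 * (m - k))) =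
      ∑ a, ∑ b, ((l a ^ 2) ^ k * (l b ^ 2) ^ (m - k) + (l b ^ 2) ^ k * (l a ^ 2) ^ (m - k)) *
        ‖coeffVec X (u a) (u b)‖ ^ 2 := by
    rw [two_mul]
    nth_rw 2 [opTrace_covMap_mul_comm]
    rw [opTrace_covMap_mul h.isSymmetric (hu.pow _) (hu.pow _),
      opTrace_covMap_mul h.isSymmetric (hu.pow _) (hu.pow _)]
    simp only [← Finset.sum_add_distrib, ← add_mul, pow_mul]
    ac_rfl
  refine le_of_mul_le_mul_left (a := (2 : ℝ)) ?_ two_pos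
  rw [hsymm, hsymm]
  exact Finset.sum_le_sum fun a _ ↦ Finset.sum_le_sum fun b _ ↦
    mul_le_mul_of_nonneg_right (hmono (sq_nonneg _) (sq_nonneg _)) (sq_nonneg _)

section Normalized

variable (h : PencilBound X s v) {m : ℕ} (hm : m ≠ 0) (hdim : Module.finrank ℝ V ≤ 2 ^ (m + 1))
  (hmom : traceMoment X (2 * (m + 1)) ≤ 1)
include h hm hdim hmom

theorem abs_covMoment_sub_le {k : ℕ} (hk : k ≤ 2 * m) :
    |covMoment X k (2 * m - k) - opTrace (covMap X (∫ x, X x ^ k ∂stdGaussian E) *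
      ∫ x, X x ^ (2 * m - k) ∂stdGaussian E)| ≤ 64 * m ^ 2 * (s * v) := by
  have hsv := mul_nonneg h.s_nonneg h.v_nonneg
  have hmom' : traceMoment X (2 * (m - 1)) ≤ 8 := by
    have := h.traceMoment_two_mul_le (show m - 1 ≤ m + 1 by omega) hdim hmom
    rw [show m + 1 - (m - 1) + 1 = 3 by omega] at this
    linarith
  have hkl : (k : ℝ) * (2 * m - k : ℕ) ≤ m ^ 2 := by
    push_cast [hk]
    nlinarith [sq_nonneg ((k : ℝ) - m)]
  have hnonneg := h.traceMoment_nonneg (m - 1)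
  calc |covMoment X k (2 * m - k) - opTrace (covMap X (∫ x, X x ^ k ∂stdGaussian E) *
        ∫ x, X x ^ (2 * m - k) ∂stdGaussian E)|
      ≤ Real.pi * (k * (2 * m - k : ℕ) * (s * v) * (2 * traceMoment X (2 * (m - 1)))) :=
        h.abs_integral_opTrace_covMap_pow_mul_pow_sub_le (even_two_mul _) (by omega)
    _ ≤ 4 * (m ^ 2 * (s * v) * (2 * 8)) := by gcongr; exact Real.pi_le_four
    _ = 64 * m ^ 2 * (s * v) := by ring

theorem covMoment_odd_le {i : ℕ} (hi : i < m) :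
    covMoment X (2 * i + 1) (2 * m - (2 * i + 1)) ≤ 64 * m ^ 2 * (s * v) := by
  have := h.abs_covMoment_sub_le hm hdim hmom (show 2 * i + 1 ≤ 2 * m by omega)
  rw [integral_clm_pow_of_odd X ⟨i, rfl⟩, map_zero, zero_mul, map_zero, sub_zero] at this
  exact (le_abs_self _).trans this

theorem covMoment_even_le {j : ℕ} (hj : j ≤ m)
    (hnorm : ‖∫ x, X x ^ (2 * j) ∂stdGaussian E‖ ≤ (1 / 16) ^ j) :
    covMoment X (2 * j) (2 * (m - j)) ≤ 4 * s * (1 / 8) ^ j + 64 * m ^ 2 * (s * v) := by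
  have hs := h.s_nonneg
  set P := covMap X (∫ x, X x ^ (2 * j) ∂stdGaussian E)
  have hP : ‖P‖ ≤ s * (1 / 16) ^ j := (h.norm_covMap_apply_le _).trans (by gcongr)
  have hmom' : traceMoment X (2 * (m - j)) ≤ 2 ^ (j + 2) := by
    have := h.traceMoment_two_mul_le (show m - j ≤ m + 1 by omega) hdim hmom
    rwa [show m + 1 - (m - j) + 1 = j + 2 by omega] at this
  have hcomm : opTrace (P * ∫ x, X x ^ (2 * (m - j)) ∂stdGaussian E) =
      ∫ x, opTrace (P * X x ^ (2 * (m - j))) ∂stdGaussian E :=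
    ((opTrace ∘L ContinuousLinearMap.mul ℝ _ P).integral_comp_comm
      (integrable_of_hasTemperateGrowth (by fun_prop))).symm
  have hmain : opTrace (P * ∫ x, X x ^ (2 * (m - j)) ∂stdGaussian E) ≤ 4 * s * (1 / 8) ^ j := by
    calc opTrace (P * ∫ x, X x ^ (2 * (m - j)) ∂stdGaussian E)
        ≤ ∫ x, ‖P‖ * opTrace (X x ^ (2 * (m - j))) ∂stdGaussian E :=
          hcomm.trans_le <| integral_mono (integrable_of_hasTemperateGrowth (by fun_prop))
            (integrable_of_hasTemperateGrowth (by fun_prop)) fun x ↦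
              (le_abs_self _).trans (abs_opTrace_mul_pow_le (h.isSymmetric x) P _)
      _ = ‖P‖ * traceMoment X (2 * (m - j)) := integral_const_mul ..
      _ ≤ s * (1 / 16) ^ j * 2 ^ (j + 2) := by
          gcongr
          exact h.traceMoment_nonneg _
      _ = 4 * s * (1 / 8) ^ j := by
          rw [pow_add, mul_assoc, ← mul_assoc ((1 / 16 : ℝ) ^ j), ← mul_pow]
          norm_num
          ring
  have := (abs_le.1 (h.abs_covMoment_sub_le hm hdim hmom (show 2 * j ≤ 2 * m by omega))).2
  rw [← Nat.mul_sub] at this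
  linarith

/- The outer even moments are controlled by the Catalan bound, the inner ones by monotonicity. -/
theorem covMoment_even_le_add {r : ℕ} (hr : (m + 1 : ℝ) ≤ 8 ^ r)
    (hnorm : ∀ j ≤ r, ‖∫ x, X x ^ (2 * j) ∂stdGaussian E‖ ≤ (1 / 16) ^ j) {j : ℕ} (hj : j ≤ m) :
    covMoment X (2 * j) (2 * (m - j)) ≤
      4 * s * ((1 / 8) ^ j + (1 / 8) ^ (m - j) + 1 / (m + 1)) + 64 * m ^ 2 * (s * v) := by
  have hs := h.s_nonneg
  have hpow (i : ℕ) : 0 ≤ 4 * s * (1 / 8 : ℝ) ^ i := by positivity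
  have hinv : 0 ≤ 4 * s * (1 / (m + 1)) := by positivity
  rcases le_or_gt j r with hjr | hjr
  · linarith [h.covMoment_even_le hm hdim hmom hj (hnorm j hjr), hpow (m - j)]
  rcases le_or_gt (m - j) r with hmjr | hmjr
  · have := h.covMoment_even_le hm hdim hmom (Nat.sub_le m j) (hnorm _ hmjr)
    rw [Nat.sub_sub_self hj, covMoment_comm] at this
    linarith [hpow j]
  · have hr' : 4 * s * (1 / 8) ^ r ≤ 4 * s * (1 / (m + 1)) := by
      rw [one_div_pow]
      gcongr
    linarith [h.covMoment_le_of_le hjr.le (show j + r ≤ m by omega), hpow j, hpow (m - j),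
      h.covMoment_even_le hm hdim hmom (show r ≤ m by omega) (hnorm r le_rfl)]

theorem sum_covMoment_even_le {r : ℕ} (hr : (m + 1 : ℝ) ≤ 8 ^ r)
    (hnorm : ∀ j ≤ r, ‖∫ x, X x ^ (2 * j) ∂stdGaussian E‖ ≤ (1 / 16) ^ j) :
    ∑ j ∈ Finset.range (m + 1), covMoment X (2 * j) (2 * m - 2 * j) ≤
      4 * s * (23 / 7) + (m + 1) * (64 * m ^ 2 * (s * v)) := by
  have hs := h.s_nonneg
  have hgeom : ∑ j ∈ Finset.range (m + 1), (1 / 8 : ℝ) ^ j ≤ 8 / 7 := by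
    have := geom_sum_mul_neg (1 / 8 : ℝ) (m + 1)
    have : 0 < (1 / 8 : ℝ) ^ (m + 1) := by positivity
    linarith
  have hreflect : ∑ j ∈ Finset.range (m + 1), (1 / 8 : ℝ) ^ (m - j) ≤ 8 / 7 :=
    (Finset.sum_range_reflect (fun j ↦ (1 / 8 : ℝ) ^ j) (m + 1)).trans_le hgeom
  calc ∑ j ∈ Finset.range (m + 1), covMoment X (2 * j) (2 * m - 2 * j)
      ≤ ∑ j ∈ Finset.range (m + 1), (4 * s * ((1 / 8) ^ j + (1 / 8) ^ (m - j) + 1 / (m + 1)) +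
          64 * m ^ 2 * (s * v)) := by
        refine Finset.sum_le_sum fun j hj ↦ ?_
        rw [← Nat.mul_sub]
        exact h.covMoment_even_le_add hm hdim hmom hr hnorm
          (Nat.lt_succ_iff.1 (Finset.mem_range.1 hj))
    _ = 4 * s * (∑ j ∈ Finset.range (m + 1), (1 / 8 : ℝ) ^ j +
          ∑ j ∈ Finset.range (m + 1), (1 / 8 : ℝ) ^ (m - j) + 1) +
          (m + 1) * (64 * m ^ 2 * (s * v)) := by
        simp only [Finset.sum_add_distrib, ← Finset.mul_sum, Finset.sum_const, Finset.card_range,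
          nsmul_eq_mul]
        push_cast
        rw [mul_one_div_cancel (by positivity)]
        ring
    _ ≤ 4 * s * (8 / 7 + 8 / 7 + 1) + (m + 1) * (64 * m ^ 2 * (s * v)) := by gcongr
    _ = 4 * s * (23 / 7) + (m + 1) * (64 * m ^ 2 * (s * v)) := by norm_num

end Normalized

theorem norm_integral_pow_le_of_le_clog (h : PencilBound X s v) {p : ℕ} (hp : 2 ≤ p)
    (hmom : traceMoment X (2 * p) ≤ 1) (hs : s ≤ 1 / 128) (hsv : p ^ 3 * (s * v) ≤ 1 / 20000)
    {j : ℕ} (hj : j ≤ Nat.clog 8 p) : ‖∫ x, X x ^ (2 * j) ∂stdGaussian E‖ ≤ (1 / 16) ^ j := by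
  have hsv₀ := mul_nonneg h.s_nonneg h.v_nonneg
  obtain ⟨hcube, hpow⟩ := cube_clog_eight_le hp
  set r := Nat.clog 8 p
  have hr : 24 * r ^ 3 * (s * v) ≤ (1 / 64) ^ r := by
    rw [one_div_pow, le_div_iff₀ (by positivity)]
    calc 24 * r ^ 3 * (s * v) * 64 ^ r = 24 * (r ^ 3 : ℕ) * (s * v) * (8 ^ r : ℕ) ^ 2 := by
          rw [show (64 : ℝ) = 8 ^ 2 by norm_num, ← pow_mul, mul_comm 2, pow_mul]
          push_cast
          rfl
      _ ≤ 24 * p * (s * v) * (8 * p : ℕ) ^ 2 := by gcongr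
      _ = 1536 * (p ^ 3 * (s * v)) := by push_cast; ring
      _ ≤ 1 := by linarith
  calc ‖∫ x, X x ^ (2 * j) ∂stdGaussian E‖ ≤ catalan j * (1 / 64) ^ j :=
        h.norm_integral_pow_two_mul_le (by omega) hmom hs
          ((Nat.le_self_pow (by norm_num) r).trans hcube) hr hj
    _ ≤ (4 ^ j : ℕ) * (1 / 64) ^ j := by
        gcongr
        exact catalan_le_four_pow j
    _ = (1 / 16) ^ j := by
        push_cast
        rw [← mul_pow]
        norm_num

theorem traceMoment_ne_one (h : PencilBound X s v) {p : ℕ} (hp : 2 ≤ p)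
    (hdim : Module.finrank ℝ V ≤ 2 ^ p) (hs : s ≤ 1 / 128) (hsv : p ^ 3 * (s * v) ≤ 1 / 20000) :
    traceMoment X (2 * p) ≠ 1 := by
  intro hmom
  obtain ⟨m, rfl⟩ := Nat.exists_eq_add_of_le' (show 1 ≤ p by omega)
  have hm : m ≠ 0 := by omega
  have hsv₀ := mul_nonneg h.s_nonneg h.v_nonneg
  have := h.s_nonneg
  set ε := 64 * (m : ℝ) ^ 2 * (s * v)
  have hodd : ∑ i ∈ Finset.range m, covMoment X (2 * i + 1) (2 * m - (2 * i + 1)) ≤ m * ε := by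
    simpa using Finset.sum_le_card_nsmul _ _ _ fun i hi ↦
      h.covMoment_odd_le hm hdim hmom.le (Finset.mem_range.1 hi)
  have heven : ∑ j ∈ Finset.range (m + 1), covMoment X (2 * j) (2 * m - 2 * j) ≤
      4 * s * (23 / 7) + (m + 1) * ε :=
    h.sum_covMoment_even_le hm hdim hmom.le (mod_cast Nat.le_pow_clog (by norm_num) _)
      fun i hi ↦ h.norm_integral_pow_le_of_le_clog hp hmom.le hs hsv hi
  have hε : (2 * m + 1) * ε ≤ 128 * ((m + 1 : ℕ) ^ 3 * (s * v)) := by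
    calc (2 * m + 1) * ε ≤ (2 * (m + 1)) * (64 * (m + 1) ^ 2 * (s * v)) := by
          unfold ε
          gcongr <;> linarith
      _ = 128 * ((m + 1 : ℕ) ^ 3 * (s * v)) := by push_cast; ring
  have hsum : traceMoment X (2 * (m + 1)) =
      ∑ j ∈ Finset.range (m + 1), covMoment X (2 * j) (2 * m - 2 * j) +
        ∑ i ∈ Finset.range m, covMoment X (2 * i + 1) (2 * m - (2 * i + 1)) := by
    rw [mul_add_one, traceMoment_succ X (2 * m + 1), add_tsub_cancel_right,
      sum_range_two_mul_add_one]
  linarith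

theorem traceMoment_le_pow (h : PencilBound X s v) {p : ℕ} (hp : 2 ≤ p)
    (hdim : Module.finrank ℝ V ≤ 2 ^ p) {R : ℝ} (hR : 0 < R) (hs : 128 * s ≤ R ^ 2)
    (hsv : 20000 * p ^ 3 * (s * v) ≤ R ^ 4) : traceMoment X (2 * p) ≤ R ^ (2 * p) := by
  by_contra! hlt
  have := mul_nonneg h.s_nonneg h.v_nonneg
  obtain ⟨ρ, hρ, hpow⟩ : ∃ ρ, R < ρ ∧ ρ ^ (2 * p) = traceMoment X (2 * p) := by
    have hpos := (pow_pos hR (2 * p)).trans hlt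
    refine ⟨traceMoment X (2 * p) ^ ((2 * p : ℕ) : ℝ)⁻¹, ?_,
      Real.rpow_inv_natCast_pow hpos.le (by omega)⟩
    rwa [Real.lt_rpow_inv_iff_of_pos hR.le hpos.le (by positivity), Real.rpow_natCast]
  have hρ₀ : 0 < ρ := hR.trans hρ
  refine (h.smul ρ⁻¹).traceMoment_ne_one hp hdim ?_ ?_ ?_
  · rw [inv_pow, inv_mul_le_iff₀ (by positivity)]
    linarith [pow_le_pow_left₀ hR.le hρ.le 2]
  · have hρ4 := pow_le_pow_left₀ hR.le hρ.le 4
    calc p ^ 3 * ((ρ⁻¹) ^ 2 * s * ((ρ⁻¹) ^ 2 * v)) = (ρ ^ 4)⁻¹ * (p ^ 3 * (s * v)) := by ring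
      _ ≤ 1 / 20000 := by
        rw [inv_mul_le_iff₀ (by positivity)]
        linarith
  · rw [traceMoment_smul, ← hpow, inv_pow, inv_mul_cancel₀ (by positivity)]

end PencilBound

end MomentBound

section TracePowForm

variable {ι E V : Type*} [Fintype ι] [NormedAddCommGroup E] [InnerProductSpace ℝ E]
  [FiniteDimensional ℝ E] [NormedAddCommGroup V] [InnerProductSpace ℝ V] [FiniteDimensional ℝ V]

/-- The quadratic form `U ↦ ∑ tr (U Tᵃ U Tᶜ)` over `a + c = m - 1`, which is the second derivative
of `tr Tᵐ⁺¹` in the direction `U` divided by `m + 1`. -/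
noncomputable def tracePowForm (m : ℕ) (T U : V →L[ℝ] V) : ℝ :=
  ∑ a ∈ Finset.range m, opTrace (U * T ^ a * U * T ^ (m - 1 - a))

theorem tracePowForm_smul (m : ℕ) (T : V →L[ℝ] V) (c : ℝ) (U : V →L[ℝ] V) :
    tracePowForm m T (c • U) = c ^ 2 * tracePowForm m T U := by
  simp only [tracePowForm, smul_mul_assoc, mul_smul_comm, map_smul, smul_eq_mul, Finset.mul_sum]
  exact Finset.sum_congr rfl fun a _ ↦ by ring

theorem sum_tracePowForm_coeff (m : ℕ) (T : V →L[ℝ] V) (X : E →L[ℝ] V →L[ℝ] V) :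
    ∑ j, tracePowForm m T (X (stdOrthonormalBasis ℝ E j)) =
      ∑ a ∈ Finset.range m, opTrace (covMap X (T ^ a) * T ^ (m - 1 - a)) := by
  simp only [tracePowForm, covMap_apply, Finset.sum_mul, map_sum]
  exact Finset.sum_comm

theorem IsEigenbasis.tracePowForm_eq {T : V →L[ℝ] V} {u : OrthonormalBasis ι ℝ V} {l : ι → ℝ}
    (h : IsEigenbasis T u l) (m : ℕ) {U : V →L[ℝ] V} (hU : (U : V →ₗ[ℝ] V).IsSymmetric) :
    tracePowForm m T U = ∑ a, ∑ b,
      (∑ c ∈ Finset.range m, l a ^ c * l b ^ (m - 1 - c)) * ⟪u a, U (u b)⟫ ^ 2 := by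
  have hterm (c e : ℕ) : opTrace (U * T ^ c * U * T ^ e) =
      ∑ a, ∑ b, l a ^ c * l b ^ e * ⟪u a, U (u b)⟫ ^ 2 := by
    rw [(h.pow e).opTrace_mul, Finset.sum_comm]
    refine Finset.sum_congr rfl fun b _ ↦ ?_
    rw [mul_apply_eq_comp, mul_apply_eq_comp, (h.pow c).inner_comp, Finset.mul_sum]
    refine Finset.sum_congr rfl fun a _ ↦ ?_
    have : ⟪u b, U (u a)⟫ = ⟪u a, U (u b)⟫ := by rw [real_inner_comm]; exact hU _ _
    rw [this]
    ring
  simp only [tracePowForm, hterm, Finset.sum_mul]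
  rw [Finset.sum_comm_cycle, Finset.sum_comm_cycle]

theorem geom_sum₂_nonneg_of_odd {m : ℕ} (hm : Odd m) (x y : ℝ) :
    0 ≤ ∑ c ∈ Finset.range m, x ^ c * y ^ (m - 1 - c) := by
  have hgeom := (Commute.all x y).geom_sum₂_mul m
  rcases lt_trichotomy x y with h | rfl | h
  · nlinarith [hm.strictMono_pow h]
  · refine Finset.sum_nonneg fun c hc ↦ ?_
    rw [← pow_add, add_tsub_cancel_of_le (Nat.le_sub_one_of_lt (Finset.mem_range.1 hc))]
    exact (hm.tsub_odd odd_one).pow_nonneg x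
  · nlinarith [hm.strictMono_pow h]

theorem tracePowForm_nonneg {m : ℕ} (hm : Odd m) {T U : V →L[ℝ] V}
    (hT : (T : V →ₗ[ℝ] V).IsSymmetric) (hU : (U : V →ₗ[ℝ] V).IsSymmetric) :
    0 ≤ tracePowForm m T U := by
  obtain ⟨u, l, h⟩ := exists_isEigenbasis hT
  rw [h.tracePowForm_eq m hU]
  exact Finset.sum_nonneg fun a _ ↦ Finset.sum_nonneg fun b _ ↦
    mul_nonneg (geom_sum₂_nonneg_of_odd hm _ _) (sq_nonneg _)

theorem IsEigenbasis.sum_tracePowForm_eq {κ : Type*} [Fintype κ] {T : V →L[ℝ] V}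
    {u : OrthonormalBasis ι ℝ V} {l : ι → ℝ} (h : IsEigenbasis T u l) (m : ℕ)
    {X : E →L[ℝ] V →L[ℝ] V} (hX : ∀ x, (X x : V →ₗ[ℝ] V).IsSymmetric) (e : κ → E) :
    ∑ j, tracePowForm m T (X (e j)) =
      ∑ a, ∑ b, (∑ c ∈ Finset.range m, l a ^ c * l b ^ (m - 1 - c)) *
        ∑ j, ⟪e j, coeffVec X (u a) (u b)⟫ ^ 2 := by
  simp only [h.tracePowForm_eq m (hX _), Finset.mul_sum, real_inner_comm _ (e _), inner_coeffVec]
  rw [Finset.sum_comm_cycle, Finset.sum_comm_cycle]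

/- Bessel's inequality for each pair of eigenvectors of `T`. -/
theorem sum_tracePowForm_le {m : ℕ} (hm : Odd m) {T : V →L[ℝ] V}
    (hT : (T : V →ₗ[ℝ] V).IsSymmetric) {X : E →L[ℝ] V →L[ℝ] V}
    (hX : ∀ x, (X x : V →ₗ[ℝ] V).IsSymmetric) {e : ι → E} (he : Orthonormal ℝ e) :
    ∑ j, tracePowForm m T (X (e j)) ≤
      ∑ j, tracePowForm m T (X (stdOrthonormalBasis ℝ E j)) := by
  obtain ⟨u, l, h⟩ := exists_isEigenbasis hT
  simp only [h.sum_tracePowForm_eq m hX]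
  gcongr with a _ b _
  · exact geom_sum₂_nonneg_of_odd hm _ _
  · rw [(stdOrthonormalBasis ℝ E).sum_sq_inner_right]
    simpa using he.sum_inner_products_le (coeffVec X (u a) (u b)) (s := Finset.univ)

end TracePowForm

section Rotation

variable {E V : Type*} [NormedAddCommGroup E] [InnerProductSpace ℝ E]
  [NormedAddCommGroup V] [InnerProductSpace ℝ V]

/-- The pencil `M + sin θ • U + cos θ • X x`: as `θ` moves away from `0`, the Gaussian fluctuation
`X x` is traded for a displacement of the mean in the direction `U`. -/
noncomputable def rotatedPencil (M U : V →L[ℝ] V) (X : E →L[ℝ] V →L[ℝ] V) (p : ℝ × E) :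
    V →L[ℝ] V :=
  M + Real.sin p.1 • U + Real.cos p.1 • X p.2

variable (M U : V →L[ℝ] V) (X : E →L[ℝ] V →L[ℝ] V) (m : ℕ)

theorem hasTemperateGrowth_rotatedPencil : (rotatedPencil M U X).HasTemperateGrowth := by
  unfold rotatedPencil
  fun_prop

theorem hasDerivAt_rotatedPencil (θ : ℝ) (x : E) :
    HasDerivAt (fun t ↦ rotatedPencil M U X (t, x)) (Real.cos θ • U - Real.sin θ • X x) θ := by
  rw [sub_eq_add_neg, ← neg_smul]
  exact (((Real.hasDerivAt_sin θ).smul_const U).const_add M).add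
    ((Real.hasDerivAt_cos θ).smul_const (X x))

variable [FiniteDimensional ℝ V]

theorem hasTemperateGrowth_tracePowForm :
    (fun x ↦ tracePowForm m (M + X x) U).HasTemperateGrowth := by
  unfold tracePowForm
  fun_prop

theorem hasDerivAt_opTrace_rotatedPencil_pow_mul (x : E) :
    HasDerivAt (fun t ↦ opTrace (rotatedPencil M U X (t, x) ^ m *
        (Real.cos t • U - Real.sin t • X x)))
      (tracePowForm m (M + X x) U - opTrace (X x * (M + X x) ^ m)) 0 := by
  have hW : HasDerivAt (fun t ↦ Real.cos t • U - Real.sin t • X x) (-X x) 0 := by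
    refine (((Real.hasDerivAt_cos 0).smul_const U).fun_sub
      ((Real.hasDerivAt_sin 0).smul_const (X x))).congr_deriv ?_
    simp
  refine (opTrace.hasFDerivAt.comp_hasDerivAt 0
    (((hasDerivAt_rotatedPencil M U X 0 x).fun_pow' m).fun_mul hW)).congr_deriv ?_
  have hZ : rotatedPencil M U X (0, x) = M + X x := by simp [rotatedPencil]
  simp only [hZ, Real.cos_zero, Real.sin_zero, one_smul, zero_smul, sub_zero]
  simp only [map_add, mul_neg, map_neg, Finset.sum_mul, map_sum, tracePowForm, sub_eq_add_neg,
    Nat.pred_eq_sub_one, opTrace_mul_comm _ (X x)]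
  congr! 2 with a
  rw [mul_assoc, mul_assoc, opTrace_mul_comm]
  simp only [mul_assoc]

variable [FiniteDimensional ℝ E] [MeasurableSpace E] [BorelSpace E]

theorem hasDerivAt_integral_opTrace_rotatedPencil_pow (θ : ℝ) :
    HasDerivAt (fun t ↦ ∫ x, opTrace (rotatedPencil M U X (t, x) ^ (m + 1)) ∂stdGaussian E)
      ((m + 1) * ∫ x, opTrace (rotatedPencil M U X (θ, x) ^ m *
        (Real.cos θ • U - Real.sin θ • X x)) ∂stdGaussian E) θ := by
  have hZ := hasTemperateGrowth_rotatedPencil M U X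
  rw [← integral_const_mul]
  refine hasDerivAt_integral_of_hasTemperateGrowth
    (f := fun p ↦ opTrace (rotatedPencil M U X p ^ (m + 1))) (by fun_prop) fun x ↦ ?_
  refine (opTrace.hasFDerivAt.comp_hasDerivAt θ
    ((hasDerivAt_rotatedPencil M U X θ x).fun_pow' (m + 1))).congr_deriv ?_
  have hterm {a : ℕ} (ha : a ∈ Finset.range (m + 1)) (T W : V →L[ℝ] V) :
      opTrace (T ^ ((m + 1).pred - a) * W * T ^ a) = opTrace (T ^ m * W) := by
    rw [opTrace_mul_comm, ← mul_assoc, ← pow_add, Nat.pred_succ,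
      Nat.add_sub_cancel' (Finset.mem_range_succ_iff.1 ha)]
  rw [map_sum, Finset.sum_congr rfl fun a ha ↦ hterm ha _ _]
  simp

theorem integral_opTrace_mul_const_add_clm_pow :
    ∫ x, opTrace (X x * (M + X x) ^ m) ∂stdGaussian E =
      ∫ x, ∑ j, tracePowForm m (M + X x) (X (stdOrthonormalBasis ℝ E j)) ∂stdGaussian E := by
  have hcomm {f : E → V →L[ℝ] V} (hf : f.HasTemperateGrowth) :
      ∫ x, opTrace (f x) ∂stdGaussian E = opTrace (∫ x, f x ∂stdGaussian E) :=
    opTrace.integral_comp_comm (integrable_of_hasTemperateGrowth hf)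
  simp only [sum_tracePowForm_coeff]
  rw [hcomm (by fun_prop), integral_mul_const_add_clm_pow, map_sum,
    integral_finsetSum _ fun a _ ↦ integrable_of_hasTemperateGrowth (by fun_prop)]
  exact Finset.sum_congr rfl fun a _ ↦ (hcomm (by fun_prop)).symm

theorem hasDerivAt_integral_opTrace_rotatedPencil_pow_mul :
    HasDerivAt (fun t ↦ ∫ x, opTrace (rotatedPencil M U X (t, x) ^ m *
        (Real.cos t • U - Real.sin t • X x)) ∂stdGaussian E)
      (∫ x, tracePowForm m (M + X x) U ∂stdGaussian E -
        ∫ x, ∑ j, tracePowForm m (M + X x) (X (stdOrthonormalBasis ℝ E j)) ∂stdGaussian E) 0 := by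
  have hZ := hasTemperateGrowth_rotatedPencil M U X
  rw [← integral_opTrace_mul_const_add_clm_pow, ← integral_sub
    (integrable_of_hasTemperateGrowth (hasTemperateGrowth_tracePowForm M U X m))
    (integrable_of_hasTemperateGrowth (by fun_prop))]
  exact hasDerivAt_integral_of_hasTemperateGrowth (f := fun p : ℝ × E ↦
      opTrace (rotatedPencil M U X p ^ m * (Real.cos p.1 • U - Real.sin p.1 • X p.2)))
    (by fun_prop) (hasDerivAt_opTrace_rotatedPencil_pow_mul M U X m)

variable {M U X}

/- The second derivative of `sin²` absorbs a nonpositive second derivative of `f`. -/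
theorem eventually_le_add_mul_sin_sq {f f' : ℝ → ℝ} {c δ : ℝ} (hf : ∀ θ, HasDerivAt f (f' θ) θ)
    (hf' : HasDerivAt f' c 0) (h0 : f' 0 = 0) (hc : c ≤ 0) (hδ : 0 < δ) :
    ∀ᶠ θ in 𝓝 0, f θ ≤ f 0 + δ * Real.sin θ ^ 2 := by
  have hd (θ : ℝ) : HasDerivAt (fun θ ↦ f θ - δ * Real.sin θ ^ 2)
      (f' θ - δ * (2 * Real.sin θ * Real.cos θ)) θ := by
    simpa using (hf θ).fun_sub (((Real.hasDerivAt_sin θ).fun_pow 2).const_mul δ)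
  have hd' := funext fun θ ↦ (hd θ).deriv
  have hmax : IsLocalMax (fun θ ↦ f θ - δ * Real.sin θ ^ 2) 0 := by
    refine isLocalMax_of_deriv_deriv_neg ?_ ?_ (hd 0).continuousAt
    · rw [hd', (hf'.fun_sub ((((Real.hasDerivAt_sin 0).const_mul 2).fun_mul
        (Real.hasDerivAt_cos 0)).const_mul δ)).deriv]
      simp only [Real.sin_zero, Real.cos_zero]
      linarith
    · simp [hd', h0]
  filter_upwards [hmax] with θ hθ
  simp only [Real.sin_zero] at hθ
  linarith

theorem eventually_integral_opTrace_rotatedPencil_pow_le {δ : ℝ} (hδ : 0 < δ)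
    (hU : opTrace (U * ∫ x, (M + X x) ^ m ∂stdGaussian E) = 0)
    (hle : ∫ x, tracePowForm m (M + X x) U ∂stdGaussian E ≤
      ∫ x, ∑ j, tracePowForm m (M + X x) (X (stdOrthonormalBasis ℝ E j)) ∂stdGaussian E) :
    ∀ᶠ θ in 𝓝 0, ∫ x, opTrace (rotatedPencil M U X (θ, x) ^ (m + 1)) ∂stdGaussian E ≤
      ∫ x, opTrace ((M + X x) ^ (m + 1)) ∂stdGaussian E + δ * Real.sin θ ^ 2 := by
  have hZ (x : E) : rotatedPencil M U X (0, x) = M + X x := by simp [rotatedPencil]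
  have hzero : ∫ x, opTrace ((M + X x) ^ m * U) ∂stdGaussian E = 0 := by
    rw [← hU, opTrace_mul_comm]
    exact (opTrace ∘L (ContinuousLinearMap.mul ℝ (V →L[ℝ] V)).flip U).integral_comp_comm
      (integrable_of_hasTemperateGrowth (f := fun x ↦ (M + X x) ^ m) (by fun_prop))
  simpa only [hZ] using eventually_le_add_mul_sin_sq
    (fun θ ↦ hasDerivAt_integral_opTrace_rotatedPencil_pow M U X m θ)
    ((hasDerivAt_integral_opTrace_rotatedPencil_pow_mul M U X m).const_mul (m + 1 : ℝ))
    (by simp [hZ, hzero])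
    (mul_nonpos_of_nonneg_of_nonpos (by positivity) (sub_nonpos.2 hle)) hδ

end Rotation

section Direction

theorem finrank_le_finrank_inf_ker_add {E F : Type*} [AddCommGroup E] [Module ℝ E]
    [FiniteDimensional ℝ E] [AddCommGroup F] [Module ℝ F] [FiniteDimensional ℝ F]
    (K : Submodule ℝ E) (φ : E →ₗ[ℝ] F) :
    Module.finrank ℝ K ≤ Module.finrank ℝ (K ⊓ φ.ker : Submodule ℝ E) + Module.finrank ℝ F := by
  have := Submodule.finrank_sup_add_finrank_inf_eq K φ.ker
  have := (K ⊔ φ.ker).finrank_le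
  have := φ.finrank_range_add_finrank_ker
  have := φ.range.finrank_le
  omega

variable {E V : Type*} [NormedAddCommGroup E] [InnerProductSpace ℝ E] [FiniteDimensional ℝ E]
  [MeasurableSpace E] [BorelSpace E]
  [NormedAddCommGroup V] [InnerProductSpace ℝ V] [FiniteDimensional ℝ V]
  {M : V →L[ℝ] V} {X : E →L[ℝ] V →L[ℝ] V} {m : ℕ}

theorem exists_mem_norm_eq_one_finrank_mul_le (hm : Odd m) (hM : (M : V →ₗ[ℝ] V).IsSymmetric)
    (hX : ∀ x, (X x : V →ₗ[ℝ] V).IsSymmetric) {K : Submodule ℝ E} (hK : K ≠ ⊥) :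
    ∃ u ∈ K, ‖u‖ = 1 ∧ Module.finrank ℝ K * ∫ x, tracePowForm m (M + X x) (X u) ∂stdGaussian E ≤
      ∫ x, ∑ j, tracePowForm m (M + X x) (X (stdOrthonormalBasis ℝ E j)) ∂stdGaussian E := by
  have hint (u : E) : Integrable (fun x ↦ tracePowForm m (M + X x) (X u)) (stdGaussian E) :=
    integrable_of_hasTemperateGrowth (hasTemperateGrowth_tracePowForm M (X u) X m)
  let e := stdOrthonormalBasis ℝ K
  have hsum : ∑ j, ∫ x, tracePowForm m (M + X x) (X (e j)) ∂stdGaussian E ≤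
      ∫ x, ∑ j, tracePowForm m (M + X x) (X (stdOrthonormalBasis ℝ E j)) ∂stdGaussian E := by
    rw [← integral_finsetSum _ fun j _ ↦ hint _]
    refine integral_mono (integrable_finsetSum _ fun j _ ↦ hint _)
      (integrable_finsetSum _ fun j _ ↦ hint _) fun x ↦ ?_
    exact sum_tracePowForm_le hm (hM.add (hX x)) hX
      (e.orthonormal.comp_linearIsometry K.subtypeₗᵢ)
  have := Submodule.nontrivial_iff_ne_bot.2 hK
  have : Nonempty (Fin (Module.finrank ℝ K)) := Fin.pos_iff_nonempty.1 Module.finrank_pos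
  obtain ⟨j, hj⟩ := Finite.exists_min fun j ↦
    ∫ x, tracePowForm m (M + X x) (X (e j)) ∂stdGaussian E
  refine ⟨e j, (e j).2, e.orthonormal.1 j, hsum.trans' ?_⟩
  simpa using Finset.card_nsmul_le_sum Finset.univ _ _ fun i _ ↦ hj i

/- Moving along the unit vector `u` by `r sin θ` while damping the noise by `cos θ` does not
increase the potential to second order, because the `r² ≤ dim K - 1` cheapest directions in `K`
together cost at most as much as the whole noise saves. -/
theorem exists_direction_eventually_le (hm : Odd m) (hM : (M : V →ₗ[ℝ] V).IsSymmetric)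
    (hX : ∀ x, (X x : V →ₗ[ℝ] V).IsSymmetric) {K : Submodule ℝ E} {r : ℝ}
    (hr : r ≠ 0) (hrK : r ^ 2 + 1 ≤ Module.finrank ℝ K) :
    ∃ u ∈ K, ‖u‖ = 1 ∧ ∀ δ > 0, ∀ᶠ θ in 𝓝 0,
      ∫ x, opTrace (rotatedPencil M (r • X u) X (θ, x) ^ (m + 1)) ∂stdGaussian E ≤
        ∫ x, opTrace ((M + X x) ^ (m + 1)) ∂stdGaussian E + δ * Real.sin θ ^ 2 := by
  let φ : E →ₗ[ℝ] ℝ := (opTrace ∘L (ContinuousLinearMap.mul ℝ (V →L[ℝ] V)).flip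
    (∫ x, (M + X x) ^ m ∂stdGaussian E) ∘L X : E →L[ℝ] ℝ)
  have hdim := finrank_le_finrank_inf_ker_add K φ
  rw [Module.finrank_self] at hdim
  have hrφ : r ^ 2 ≤ Module.finrank ℝ (K ⊓ φ.ker : Submodule ℝ E) := by
    have : (Module.finrank ℝ K : ℝ) ≤ Module.finrank ℝ (K ⊓ φ.ker : Submodule ℝ E) + 1 :=
      mod_cast hdim
    linarith
  have hbot : K ⊓ φ.ker ≠ ⊥ := fun h ↦ hrφ.not_gt (by rw [h]; simpa using by positivity)
  obtain ⟨u, hu, hu1, hle⟩ := exists_mem_norm_eq_one_finrank_mul_le hm hM hX hbot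
  refine ⟨u, hu.1, hu1, fun δ hδ ↦ eventually_integral_opTrace_rotatedPencil_pow_le m hδ ?_ ?_⟩
  · rw [smul_mul_assoc, map_smul, show opTrace (X u * _) = 0 from hu.2, smul_zero]
  · refine hle.trans' ?_
    simp only [tracePowForm_smul, integral_const_mul]
    gcongr
    exact integral_nonneg fun x ↦ tracePowForm_nonneg hm (hM.add (hX x)) (hX u)

end Direction

section Potential

variable {E V : Type*} [NormedAddCommGroup E] [InnerProductSpace ℝ E] [FiniteDimensional ℝ E]
  [MeasurableSpace E]
  [NormedAddCommGroup V] [InnerProductSpace ℝ V] [FiniteDimensional ℝ V]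
  (X : E →L[ℝ] V →L[ℝ] V)

/-- The trace potential of the walk at the point `q.2`, smoothed by Gaussian noise of scale
`q.1`. -/
noncomputable def potential (n : ℕ) (q : ℝ × E) : ℝ :=
  ∫ x, opTrace ((X q.2 + q.1 • X x) ^ n) ∂stdGaussian E

theorem potential_zero_right (n : ℕ) (β : ℝ) :
    potential X n (β, 0) = β ^ n * traceMoment X n := by
  rw [← traceMoment_smul]
  simp [potential, traceMoment]

variable [BorelSpace E]

theorem continuous_potential (n : ℕ) : Continuous (potential X n) :=
  continuous_integral_of_hasTemperateGrowth
    (f := fun p : (ℝ × E) × E ↦ opTrace ((X p.1.2 + p.1.1 • X p.2) ^ n)) (by fun_prop)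

variable {X}

theorem exists_potential_step {m : ℕ} (hm : Odd m) (hX : ∀ x, (X x : V →ₗ[ℝ] V).IsSymmetric)
    {K : Submodule ℝ E} {r : ℝ} (hr : r ≠ 0) (hrK : r ^ 2 + 1 ≤ Module.finrank ℝ K)
    (β : ℝ) (z : E) :
    ∃ u ∈ K, ‖u‖ = 1 ∧ ∀ δ > 0, ∀ᶠ θ in 𝓝 0,
      potential X (m + 1) (β * Real.cos θ, z + Real.sin θ • (r * β) • u) ≤
        potential X (m + 1) (β, z) + δ * Real.sin θ ^ 2 := by
  obtain ⟨u, hu, hu1, hle⟩ := exists_direction_eventually_le (M := X z) (X := β • X) hm (hX z)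
    (fun x ↦ (hX x).smul rfl) hr hrK
  refine ⟨u, hu, hu1, fun δ hδ ↦ ?_⟩
  simpa [potential, rotatedPencil, smul_smul, mul_comm, mul_left_comm] using hle δ hδ

theorem norm_pow_le_potential (hX : ∀ x, (X x : V →ₗ[ℝ] V).IsSymmetric) {p : ℕ} (hp : p ≠ 0)
    (q : ℝ × E) : ‖X q.2‖ ^ (2 * p) ≤ potential X (2 * p) q := by
  let f : E → V →L[ℝ] V := fun x ↦ X q.2 + q.1 • X x
  have hf : f.HasTemperateGrowth := by fun_prop
  have hint : Integrable f (stdGaussian E) := integrable_of_hasTemperateGrowth hf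
  have hmean : ∫ x, f x ∂stdGaussian E = X q.2 := by
    rw [integral_add (integrable_const _) (integrable_of_hasTemperateGrowth (by fun_prop)),
      integral_smul, X.integral_comp_comm (φ := fun x ↦ x) IsGaussian.integrable_id,
      integral_id_stdGaussian]
    simp
  have hle (x : E) : ‖f x‖ ^ (2 * p) ≤ opTrace (f x ^ (2 * p)) := by
    obtain ⟨u, l, h⟩ := exists_isEigenbasis (T := f x) ((hX q.2).add ((hX x).smul rfl))
    exact h.norm_pow_le_opTrace_pow hp
  have htrace : Integrable (fun x ↦ opTrace (f x ^ (2 * p))) (stdGaussian E) :=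
    integrable_of_hasTemperateGrowth (by fun_prop)
  have hpow : Integrable (fun x ↦ ‖f x‖ ^ (2 * p)) (stdGaussian E) :=
    htrace.mono' (hint.1.norm.pow _) (.of_forall fun x ↦ by simpa using hle x)
  calc ‖X q.2‖ ^ (2 * p)
      ≤ ∫ x, ‖f x‖ ^ (2 * p) ∂stdGaussian E := by
        rw [← hmean]
        exact (convexOn_univ_norm.pow (fun _ _ ↦ norm_nonneg _) (2 * p)).map_integral_le
          (by fun_prop) isClosed_univ (.of_forall fun _ ↦ Set.mem_univ _) hint hpow
    _ ≤ potential X (2 * p) q := integral_mono hpow htrace hle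

end Potential

section Walk

theorem eventually_abs_add_smul_le_one {ι : Type*} [Finite ι] {x₀ : ι → ℝ}
    {z u : EuclideanSpace ℝ ι} (hz : ∀ i, |x₀ i + z i| ≤ 1)
    (hu : ∀ i, |x₀ i + z i| = 1 → u i = 0) (c : ℝ) :
    ∀ᶠ θ in 𝓝 0, ∀ i, |x₀ i + (z + Real.sin θ • c • u) i| ≤ 1 := by
  refine Filter.eventually_all.2 fun i ↦ ?_
  rcases (hz i).eq_or_lt with h | h
  · simp [hu i h, h.le]
  · have hcont : Continuous fun θ ↦ |x₀ i + (z i + Real.sin θ * (c * u i))| := by fun_prop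
    filter_upwards [hcont.continuousAt.eventually_lt continuousAt_const
      (by simpa using h : |x₀ i + (z i + Real.sin 0 * (c * u i))| < 1)] with θ hθ using hθ.le

variable {ι : Type*} [Fintype ι] {H : Submodule ℝ (EuclideanSpace ℝ ι)}

/-- The states `(β, z)` of a walk started at `(b, 0)` that stay in the cube centred at `-x₀` while
`‖z‖` grows and the potential `Ψ` does not, as measured against the decrease of `β`. -/
def walkRegion (Ψ : ℝ × H → ℝ) (x₀ : ι → ℝ) (r b δ : ℝ) : Set (ℝ × H) :=
  {q | 0 ≤ q.1 ∧ q.1 ≤ b ∧ (∀ i, |x₀ i + q.2.1 i| ≤ 1) ∧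
    r ^ 2 * (b ^ 2 - q.1 ^ 2) ≤ ‖q.2‖ ^ 2 ∧ Ψ q ≤ Ψ (b, 0) + δ * (b ^ 2 - q.1 ^ 2)}

variable {Ψ : ℝ × H → ℝ} {x₀ : ι → ℝ} {r b δ : ℝ}

theorem norm_sq_le_of_abs_add_le_one (hx₀ : ∀ i, |x₀ i| ≤ 1) {z : EuclideanSpace ℝ ι}
    (hz : ∀ i, |x₀ i + z i| ≤ 1) : ‖z‖ ^ 2 ≤ 4 * Fintype.card ι := by
  have hcoord (i : ι) : ‖z i‖ ^ 2 ≤ 4 := by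
    have h₀ := abs_le.1 (hx₀ i)
    have h := abs_le.1 (hz i)
    rw [Real.norm_eq_abs, sq_abs]
    nlinarith
  rw [EuclideanSpace.norm_sq_eq, mul_comm, ← nsmul_eq_mul]
  exact Finset.sum_le_card_nsmul _ _ _ fun i _ ↦ hcoord i

theorem isCompact_walkRegion (hΨ : Continuous Ψ) (hx₀ : ∀ i, |x₀ i| ≤ 1) :
    IsCompact (walkRegion Ψ x₀ r b δ) := by
  refine ((isCompact_Icc (a := 0) (b := b)).prod (isCompact_closedBall (0 : H)
    √(4 * Fintype.card ι))).of_isClosed_subset ?_ ?_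
  · simp only [walkRegion, Set.ofPred_and, Set.ofPred_forall]
    refine (isClosed_le ?_ ?_).inter <| (isClosed_le ?_ ?_).inter <|
      (isClosed_iInter fun i ↦ isClosed_le ?_ ?_).inter <|
      (isClosed_le ?_ ?_).inter (isClosed_le ?_ ?_) <;> fun_prop
  · rintro q ⟨h0, hb, hbox, -, -⟩
    refine ⟨⟨h0, hb⟩, mem_closedBall_zero_iff.2 (Real.le_sqrt_of_sq_le ?_)⟩
    exact norm_sq_le_of_abs_add_le_one hx₀ hbox

open Finset in
theorem exists_finrank_le_orthogonal_tight (x₀ : ι → ℝ) (z : H) :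
    ∃ K : Submodule ℝ H, (∀ u ∈ K, ⟪z, u⟫ = 0 ∧ ∀ i, |x₀ i + z.1 i| = 1 → u.1 i = 0) ∧
      Module.finrank ℝ H ≤ Module.finrank ℝ K + #{i | |x₀ i + z.1 i| = 1} + 1 := by
  let T : Finset ι := {i | |x₀ i + z.1 i| = 1}
  let φ : H →ₗ[ℝ] (T → ℝ) × ℝ := (LinearMap.pi fun i ↦
    (EuclideanSpace.proj i.1 : EuclideanSpace ℝ ι →L[ℝ] ℝ).toLinearMap ∘ₗ H.subtype).prod
    (innerₛₗ ℝ z)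
  refine ⟨φ.ker, fun u hu ↦ ⟨congr_arg Prod.snd hu, fun i hi ↦ ?_⟩, ?_⟩
  · exact congr_fun (congr_arg Prod.fst hu) ⟨i, by simpa [T] using hi⟩
  · have hrange := φ.range.finrank_le
    simp only [Module.finrank_prod, Module.finrank_pi, Module.finrank_self,
      Fintype.card_coe] at hrange
    have hT : #T = #{i | |x₀ i + z.1 i| = 1} := rfl
    have := φ.finrank_range_add_finrank_ker
    omega

open Finset in
theorem exists_mem_walkRegion_fst_lt {k : ℝ}
    (hstep : ∀ β z, ∀ K : Submodule ℝ H, r ^ 2 + 1 ≤ Module.finrank ℝ K → ∃ u ∈ K, ‖u‖ = 1 ∧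
      ∀ δ > 0, ∀ᶠ θ in 𝓝 0, Ψ (β * Real.cos θ, z + Real.sin θ • (r * β) • u) ≤
        Ψ (β, z) + δ * Real.sin θ ^ 2)
    (hδ : 0 < δ) (hk : r ^ 2 + 2 + k ≤ Module.finrank ℝ H) {β : ℝ} {z : H}
    (hq : (β, z) ∈ walkRegion Ψ x₀ r b δ) (hβ : 0 < β) (hT : #{i | |x₀ i + z.1 i| = 1} < k) :
    ∃ q ∈ walkRegion Ψ x₀ r b δ, q.1 < β := by
  obtain ⟨-, hβb, hbox, hnorm, hpot⟩ := hq
  obtain ⟨K, hK, hdim⟩ := exists_finrank_le_orthogonal_tight x₀ z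
  have hdim' : r ^ 2 + 1 ≤ Module.finrank ℝ K := by
    have : (Module.finrank ℝ H : ℝ) ≤ Module.finrank ℝ K + #{i | |x₀ i + z.1 i| = 1} + 1 :=
      mod_cast hdim
    linarith
  obtain ⟨u, hu, hu1, hΨ⟩ := hstep β z K hdim'
  obtain ⟨hzu, htight⟩ := hK u hu
  have hsmall : ∀ᶠ θ : ℝ in 𝓝[>] 0, θ ∈ Set.Ioo 0 (Real.pi / 2) :=
    Ioo_mem_nhdsGT (by positivity)
  obtain ⟨θ, ⟨hθ0, hθ1⟩, hpot', hbox'⟩ := (hsmall.and (nhdsWithin_le_nhds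
    ((hΨ (δ * β ^ 2) (by positivity)).and
      (eventually_abs_add_smul_le_one hbox htight (r * β))))).exists
  have hcos : Real.cos θ < 1 := by
    simpa using Real.cos_lt_cos_of_nonneg_of_le_pi_div_two le_rfl hθ1.le hθ0
  have hcos0 : 0 < Real.cos θ := Real.cos_pos_of_mem_Ioo ⟨by linarith, hθ1⟩
  have hcossq : (β * Real.cos θ) ^ 2 = β ^ 2 - β ^ 2 * Real.sin θ ^ 2 := by
    rw [mul_pow, Real.cos_sq']; ring
  refine ⟨(β * Real.cos θ, z + Real.sin θ • (r * β) • u),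
    ⟨by positivity, by nlinarith, hbox', ?_, ?_⟩, by nlinarith⟩
  · have hnormsq : ‖Real.sin θ • (r * β) • u‖ ^ 2 = r ^ 2 * β ^ 2 * Real.sin θ ^ 2 := by
      rw [smul_smul, norm_smul, hu1, mul_one, Real.norm_eq_abs, sq_abs]; ring
    have hinner : ⟪z, Real.sin θ • (r * β) • u⟫ = 0 := by
      rw [smul_smul]
      exact (real_inner_smul_right _ _ _).trans (by rw [hzu, mul_zero])
    rw [norm_add_sq_real, hnormsq, hcossq, hinner]
    linarith
  · simp only at hpot ⊢
    rw [hcossq]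
    linarith

open Finset in
/- At a point of the region minimising the noise `β`, the walk cannot proceed, so many coordinates
must be tight. -/
theorem exists_walk_endpoint {k : ℝ} (hΨ : Continuous Ψ)
    (hstep : ∀ β z, ∀ K : Submodule ℝ H, r ^ 2 + 1 ≤ Module.finrank ℝ K → ∃ u ∈ K, ‖u‖ = 1 ∧
      ∀ δ > 0, ∀ᶠ θ in 𝓝 0, Ψ (β * Real.cos θ, z + Real.sin θ • (r * β) • u) ≤
        Ψ (β, z) + δ * Real.sin θ ^ 2)
    (hδ : 0 < δ) (hk : r ^ 2 + 2 + k ≤ Module.finrank ℝ H) (hx₀ : ∀ i, |x₀ i| ≤ 1) (hb : 0 ≤ b)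
    (hrb : 4 * Fintype.card ι < r ^ 2 * b ^ 2) :
    ∃ β, ∃ z : H, (∀ i, |x₀ i + z.1 i| ≤ 1) ∧ Ψ (β, z) ≤ Ψ (b, 0) + δ * b ^ 2 ∧
      k ≤ #{i | |x₀ i + z.1 i| = 1} := by
  obtain ⟨⟨β, z⟩, hq, hmin⟩ := (isCompact_walkRegion (r := r) (b := b) (δ := δ) hΨ
    hx₀).exists_isMinOn ⟨(b, 0), hb, le_rfl, by simpa using hx₀, by simp, by simp⟩
    continuous_fst.continuousOn
  obtain ⟨hβ0, -, hbox, hnorm, hpot⟩ := id hq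
  have hβ : 0 < β := by
    refine hβ0.lt_of_ne fun h ↦ hrb.not_ge ?_
    have h0 : β = 0 := h.symm
    simpa [h0] using hnorm.trans (norm_sq_le_of_abs_add_le_one hx₀ hbox)
  refine ⟨β, z, hbox, hpot.trans ?_, ?_⟩
  · gcongr
    simpa using sq_nonneg β
  · by_contra! hT
    obtain ⟨q, hqmem, hlt⟩ := exists_mem_walkRegion_fst_lt hstep hδ hk hq hβ hT
    exact hlt.not_ge (hmin hqmem)

end Walk

section GoodSubspace

variable {E V : Type*} [NormedAddCommGroup E] [InnerProductSpace ℝ E]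
  [NormedAddCommGroup V] [InnerProductSpace ℝ V]

theorem IsEigenbasis.inner_apply_self_le {κ : Type*} [Fintype κ] {T : V →L[ℝ] V}
    {u : OrthonormalBasis κ ℝ V} {l : κ → ℝ} (h : IsEigenbasis T u l) {c : ℝ} {x : V}
    (hx : ∀ i, c < l i → ⟪u i, x⟫ = 0) : ⟪x, T x⟫ ≤ c * ‖x‖ ^ 2 := by
  calc ⟪x, T x⟫ = ∑ i, l i * ⟪u i, x⟫ ^ 2 := by
        simpa [real_inner_comm, sq] using h.inner_comp 1 x x
    _ ≤ ∑ i, c * ⟪u i, x⟫ ^ 2 := by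
        refine Finset.sum_le_sum fun i _ ↦ ?_
        by_cases hi : c < l i
        · simp [hx i hi]
        · gcongr
          exact not_lt.1 hi
    _ = c * ‖x‖ ^ 2 := by rw [← Finset.mul_sum, u.sum_sq_inner_right]

variable [FiniteDimensional ℝ E]

open Finset in
theorem exists_submodule_inner_le_mul_norm_sq {T : E →L[ℝ] E} (hT : T.IsPositive) {c : ℝ}
    (hc : 0 ≤ c) : ∃ H : Submodule ℝ E,
      c * (Module.finrank ℝ E - Module.finrank ℝ H) ≤ opTrace T ∧
        ∀ x ∈ H, ⟪x, T x⟫ ≤ c * ‖x‖ ^ 2 := by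
  classical
  obtain ⟨u, l, h⟩ := exists_isEigenbasis hT.isSymmetric
  have hl (i) : 0 ≤ l i := by simpa [h i, real_inner_smul_left] using hT.inner_nonneg_left (u i)
  let S := ({i | c < l i} : Finset _).image u
  refine ⟨(Submodule.span ℝ (S : Set E))ᗮ, ?_, fun x hx ↦ ?_⟩
  · have hcodim : Module.finrank ℝ E - Module.finrank ℝ (Submodule.span ℝ (S : Set E))ᗮ ≤
        (#{i | c < l i} : ℝ) := by
      have := (Submodule.span ℝ (S : Set E)).finrank_add_finrank_orthogonal
      have hS : Module.finrank ℝ (Submodule.span ℝ (S : Set E)) ≤ #{i | c < l i} :=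
        (finrank_span_finset_le_card (R := ℝ) S).trans card_image_le
      rw [sub_le_iff_le_add]
      exact_mod_cast (by omega)
    calc c * (Module.finrank ℝ E - Module.finrank ℝ (Submodule.span ℝ (S : Set E))ᗮ)
        ≤ ∑ i with c < l i, c := by
          rw [sum_const, nsmul_eq_mul, mul_comm]
          gcongr
      _ ≤ ∑ i with c < l i, l i := by
          gcongr with i hi
          exact (mem_filter.1 hi).2.le
      _ ≤ ∑ i, l i := sum_le_univ_sum_of_nonneg hl
      _ = opTrace T := h.opTrace_eq_sum.symm
  · exact h.inner_apply_self_le fun i hi ↦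
      hx (u i) (Submodule.subset_span (by simpa [S] using ⟨i, hi, rfl⟩))

variable [FiniteDimensional ℝ V]

/-- The Gram operator of the pencil `X` for the Frobenius inner product. -/
noncomputable def gramOp (X : E →L[ℝ] V →L[ℝ] V) : E →L[ℝ] E :=
  ∑ k, (X.flip (stdOrthonormalBasis ℝ V k)).adjoint ∘L X.flip (stdOrthonormalBasis ℝ V k)

variable {X : E →L[ℝ] V →L[ℝ] V}

theorem isPositive_gramOp : (gramOp X).IsPositive :=
  Finset.sum_induction _ ContinuousLinearMap.IsPositive (fun _ _ ↦ .add)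
    ContinuousLinearMap.isPositive_zero fun _ _ ↦ ContinuousLinearMap.isPositive_adjoint_comp_self _

theorem inner_gramOp (hX : ∀ x, (X x : V →ₗ[ℝ] V).IsSymmetric) (x : E) :
    ⟪x, gramOp X x⟫ = opTrace (X x * X x) := by
  simp [gramOp, sum_apply, inner_sum, ContinuousLinearMap.adjoint_inner_right,
    opTrace_mul_self_eq_sum_norm_sq (stdOrthonormalBasis ℝ V) (hX x)]

theorem opTrace_gramOp {κ : Type*} [Fintype κ] (hX : ∀ x, (X x : V →ₗ[ℝ] V).IsSymmetric)
    (b : OrthonormalBasis κ ℝ E) : opTrace (gramOp X) = ∑ j, opTrace (X (b j) * X (b j)) := by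
  simp only [opTrace_eq_sum_inner b, inner_gramOp hX]

theorem sum_norm_sq_apply_le {κ κ' : Type*} [Fintype κ] [Fintype κ'] (X : E →L[ℝ] V →L[ℝ] V)
    (b : OrthonormalBasis κ ℝ E) {e : κ' → E} (he : Orthonormal ℝ e) (y : V) :
    ∑ j, ‖X (e j) y‖ ^ 2 ≤ ∑ j, ‖X (b j) y‖ ^ 2 := by
  simp_rw [← (stdOrthonormalBasis ℝ V).sum_sq_inner_right, ← inner_coeffVec]
  rw [Finset.sum_comm, Finset.sum_comm (s := Finset.univ (α := κ))]
  gcongr with k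
  rw [b.sum_sq_inner_left]
  simpa [real_inner_comm] using
    he.sum_inner_products_le (coeffVec X (stdOrthonormalBasis ℝ V k) y) (s := Finset.univ)

theorem exists_submodule_pencilBound {κ : Type*} [Fintype κ] (b : OrthonormalBasis κ ℝ E)
    (hX : ∀ x, (X x : V →ₗ[ℝ] V).IsSymmetric) {s v : ℝ} (hs : 0 ≤ s)
    (hv : 0 < v) (hXs : ∀ y, ∑ j, ‖X (b j) y‖ ^ 2 ≤ s * ‖y‖ ^ 2)
    (hXv : ∑ j, opTrace (X (b j) * X (b j)) ≤ Module.finrank ℝ E * v) :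
    ∃ H : Submodule ℝ E, 9 / 10 * (Module.finrank ℝ E : ℝ) ≤ Module.finrank ℝ H ∧
      PencilBound (X ∘L H.subtypeL) s (10 * v) := by
  obtain ⟨H, hdim, hH⟩ := exists_submodule_inner_le_mul_norm_sq (isPositive_gramOp (X := X))
    (by positivity : 0 ≤ 10 * v)
  refine ⟨H, ?_, fun x ↦ hX x, fun y ↦ ?_, fun x ↦ ?_, hs, by positivity⟩
  · rw [opTrace_gramOp hX b] at hdim
    have := le_of_mul_le_mul_right ((by linarith :
      10 * (Module.finrank ℝ E - Module.finrank ℝ H) * v ≤ Module.finrank ℝ E * v)) hv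
    linarith
  · exact (sum_norm_sq_apply_le X b ((stdOrthonormalBasis ℝ H).orthonormal.comp_linearIsometry
      H.subtypeₗᵢ) y).trans (hXs y)
  · exact (inner_gramOp hX x.1).ge.trans (hH x x.2)

end GoodSubspace

section Operators

variable {ι V : Type*} [Fintype ι] [NormedAddCommGroup V] [InnerProductSpace ℝ V]

theorem sum_norm_sq_apply_le_norm_sum_mul_self {A : ι → V →L[ℝ] V}
    (hA : ∀ i, (A i : V →ₗ[ℝ] V).IsSymmetric) (y : V) :
    ∑ i, ‖A i y‖ ^ 2 ≤ ‖∑ i, A i * A i‖ * ‖y‖ ^ 2 := by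
  have hsum : ∑ i, ‖A i y‖ ^ 2 = ⟪y, (∑ i, A i * A i) y⟫ := by
    simp only [sum_apply, mul_apply_eq_comp, inner_sum, ← real_inner_self_eq_norm_sq]
    exact Finset.sum_congr rfl fun i _ ↦ hA i _ _
  calc ∑ i, ‖A i y‖ ^ 2 = ⟪y, (∑ i, A i * A i) y⟫ := hsum
    _ ≤ ‖y‖ * ‖(∑ i, A i * A i) y‖ := real_inner_le_norm _ _
    _ ≤ ‖y‖ * (‖∑ i, A i * A i‖ * ‖y‖) := by gcongr; exact ContinuousLinearMap.le_opNorm _ _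
    _ = ‖∑ i, A i * A i‖ * ‖y‖ ^ 2 := by ring

theorem norm_le_of_norm_sum_mul_self_le {A : ι → V →L[ℝ] V}
    (hA : ∀ i, (A i : V →ₗ[ℝ] V).IsSymmetric) {σ : ℝ} (hσ : 0 ≤ σ)
    (hσA : ‖∑ i, A i * A i‖ ≤ σ ^ 2) (i : ι) : ‖A i‖ ≤ σ := by
  refine (A i).opNorm_le_bound hσ fun y ↦ le_of_sq_le_sq ?_ (by positivity)
  calc ‖A i y‖ ^ 2 ≤ ∑ j, ‖A j y‖ ^ 2 :=
        Finset.single_le_sum (f := fun j ↦ ‖A j y‖ ^ 2) (fun _ _ ↦ by positivity)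
          (Finset.mem_univ i)
    _ ≤ ‖∑ j, A j * A j‖ * ‖y‖ ^ 2 := sum_norm_sq_apply_le_norm_sum_mul_self hA y
    _ ≤ (σ * ‖y‖) ^ 2 := by
        rw [mul_pow]
        gcongr

theorem exists_abs_eq_one_norm_sum_le [Nonempty ι] {A : ι → V →L[ℝ] V}
    {σ : ℝ} (hA : ∀ i, ‖A i‖ ≤ σ) {x₀ : ι → ℝ} (hx₀ : ∀ i, |x₀ i| ≤ 1) :
    ∃ x : ι → ℝ, (∀ i, |x i| ≤ 1) ∧ ‖∑ i, (x i - x₀ i) • A i‖ ≤ 2 * σ ∧ ∃ i, |x i| = 1 := by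
  classical
  obtain ⟨k⟩ := ‹Nonempty ι›
  refine ⟨Function.update x₀ k 1, fun i ↦ ?_, ?_, k, by simp⟩
  · rcases eq_or_ne i k with rfl | hi
    · simp
    · simpa [hi] using hx₀ i
  · have hsum : ∑ i, (Function.update x₀ k 1 i - x₀ i) • A i = (1 - x₀ k) • A k := by
      rw [Finset.sum_eq_single_of_mem k (Finset.mem_univ k) fun i _ hi ↦ by simp [hi]]
      simp
    rw [hsum, norm_smul, Real.norm_eq_abs]
    have := abs_le.1 (hx₀ k)
    exact mul_le_mul (abs_le.2 ⟨by linarith, by linarith⟩) (hA k) (norm_nonneg _) zero_le_two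

/-- The linear pencil `x ↦ ∑ xᵢ Aᵢ`. -/
noncomputable def pencil (A : ι → V →L[ℝ] V) : EuclideanSpace ℝ ι →L[ℝ] V →L[ℝ] V :=
  ∑ i, (EuclideanSpace.proj i).smulRight (A i)

theorem pencil_apply (A : ι → V →L[ℝ] V) (x : EuclideanSpace ℝ ι) :
    pencil A x = ∑ i, x i • A i := by
  simp [pencil, sum_apply]

theorem pencil_basisFun (A : ι → V →L[ℝ] V) (i : ι) :
    pencil A (EuclideanSpace.basisFun ι ℝ i) = A i := by
  classical
  simp [pencil_apply]

theorem isSymmetric_pencil {A : ι → V →L[ℝ] V} (hA : ∀ i, (A i : V →ₗ[ℝ] V).IsSymmetric)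
    (x : EuclideanSpace ℝ ι) : (pencil A x : V →ₗ[ℝ] V).IsSymmetric := by
  intro y w
  simp [pencil_apply, sum_inner, inner_sum, real_inner_smul_left,
    real_inner_smul_right, fun i ↦ (hA i).apply_clm y w]

end Operators

section Coloring

variable {ι V : Type*} [Fintype ι] [NormedAddCommGroup V] [InnerProductSpace ℝ V]
  [FiniteDimensional ℝ V]

theorem PencilBound.exists_partial_coloring {H : Submodule ℝ (EuclideanSpace ℝ ι)}
    {X : H →L[ℝ] V →L[ℝ] V} {s v : ℝ} (h : PencilBound X s v) (hι : 10 ≤ Fintype.card ι)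
    (hH : 9 / 10 * (Fintype.card ι : ℝ) ≤ Module.finrank ℝ H) {p : ℕ} (hp : 2 ≤ p)
    (hdim : Module.finrank ℝ V ≤ 2 ^ p) {R : ℝ} (hR : 0 < R) (hs : 128 * s ≤ R ^ 2)
    (hsv : 20000 * p ^ 3 * (s * v) ≤ R ^ 4) {x₀ : ι → ℝ} (hx₀ : ∀ i, |x₀ i| ≤ 1) :
    ∃ z : H, (∀ i, |x₀ i + z.1 i| ≤ 1) ∧ ‖X z‖ ≤ 6 * R ∧
      1 / 10 * (Fintype.card ι : ℝ) ≤ Finset.card {i | |x₀ i + z.1 i| = 1} := by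
  have hn : (10 : ℝ) ≤ Fintype.card ι := by exact_mod_cast hι
  set r := √(Fintype.card ι / 2)
  have hr : r ^ 2 = Fintype.card ι / 2 := Real.sq_sqrt (by positivity)
  have hr0 : r ≠ 0 := fun h0 ↦ by rw [h0] at hr; linarith
  obtain ⟨m, hm, hmp⟩ : ∃ m, Odd m ∧ m + 1 = 2 * p := ⟨2 * (p - 1) + 1, by simp, by omega⟩
  obtain ⟨β, z, hz, hpot, hcard⟩ := exists_walk_endpoint (r := r) (b := 3)
    (δ := (3 * R) ^ (2 * p) / 9) (k := 1 / 10 * Fintype.card ι)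
    (continuous_potential X (2 * p))
    (fun β z K hK ↦ hmp ▸ exists_potential_step hm h.isSymmetric hr0 hK β z)
    (by positivity) (by rw [hr]; linarith) hx₀ (by norm_num) (by rw [hr]; linarith)
  refine ⟨z, hz, le_of_pow_le_pow_left₀ (n := 2 * p) (by omega) (by positivity) ?_, hcard⟩
  calc ‖X z‖ ^ (2 * p) ≤ potential X (2 * p) (β, z) :=
        norm_pow_le_potential h.isSymmetric (by omega) (β, z)
    _ ≤ 3 ^ (2 * p) * traceMoment X (2 * p) + (3 * R) ^ (2 * p) := by
        rw [← potential_zero_right]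
        linarith
    _ ≤ 3 ^ (2 * p) * R ^ (2 * p) + (3 * R) ^ (2 * p) := by
        gcongr
        exact h.traceMoment_le_pow hp hdim hR hs hsv
    _ = 2 ^ 1 * (3 * R) ^ (2 * p) := by ring
    _ ≤ 2 ^ (2 * p) * (3 * R) ^ (2 * p) := by
        gcongr
        · norm_num
        · omega
    _ = (6 * R) ^ (2 * p) := by rw [← mul_pow]; ring

/-- The discrepancy bound of the partial coloring lemma, up to a constant factor. -/
noncomputable def discrepancyScale (d : ℕ) (σ f : ℝ) : ℝ :=
  σ + Real.log d ^ (3 / 4 : ℝ) * √(σ * f)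

theorem le_discrepancyScale (d : ℕ) (σ f : ℝ) : σ ≤ discrepancyScale d σ f :=
  le_add_of_nonneg_right
    (mul_nonneg (Real.rpow_nonneg (Real.log_natCast_nonneg d) _) (Real.sqrt_nonneg _))

theorem log_pow_three_mul_le_discrepancyScale_pow_four (d : ℕ) {σ f : ℝ} (hσ : 0 ≤ σ)
    (hf : 0 ≤ f) : Real.log d ^ 3 * (σ * f) ^ 2 ≤ discrepancyScale d σ f ^ 4 := by
  have hlog : 0 ≤ Real.log d := Real.log_natCast_nonneg d
  have hw : (Real.log d ^ (3 / 4 : ℝ)) ^ 4 = Real.log d ^ 3 := by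
    rw [← Real.rpow_mul_natCast hlog, ← Real.rpow_natCast]
    norm_num
  calc Real.log d ^ 3 * (σ * f) ^ 2 = (Real.log d ^ (3 / 4 : ℝ) * √(σ * f)) ^ 4 := by
        rw [mul_pow (_ ^ _), hw, pow_mul √(σ * f) 2 2, Real.sq_sqrt (by positivity)]
    _ ≤ discrepancyScale d σ f ^ 4 := by
        gcongr
        exact le_add_of_nonneg_left hσ

theorem clog_two_add_one_le_five_mul_log {d : ℕ} (hd : 2 ≤ d) :
    ((Nat.clog 2 d + 1 : ℕ) : ℝ) ≤ 5 * Real.log d := by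
  have hpow : (2 : ℝ) ^ (Nat.clog 2 d - 1) ≤ d := by
    exact_mod_cast (Nat.pow_pred_clog_lt_self one_lt_two hd).le
  have hlog : (Nat.clog 2 d - 1) * Real.log 2 ≤ Real.log d := by
    have := Real.log_le_log (by positivity) hpow
    rwa [Real.log_pow, Nat.cast_pred (Nat.clog_pos one_lt_two hd)] at this
  have hlog2 : Real.log 2 ≤ Real.log d := Real.log_le_log two_pos (by exact_mod_cast hd)
  push_cast
  nlinarith [Real.log_two_gt_d9]

theorem PencilBound.exists_norm_le_discrepancyScale {H : Submodule ℝ (EuclideanSpace ℝ ι)}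
    {X : H →L[ℝ] V →L[ℝ] V} {σ f : ℝ} (hσ : 0 < σ) (hf : 0 < f)
    (h : PencilBound X (σ ^ 2) (10 * f ^ 2)) (hι : 10 ≤ Fintype.card ι)
    (hH : 9 / 10 * (Fintype.card ι : ℝ) ≤ Module.finrank ℝ H) (hd : 2 ≤ Module.finrank ℝ V)
    {x₀ : ι → ℝ} (hx₀ : ∀ i, |x₀ i| ≤ 1) :
    ∃ z : H, (∀ i, |x₀ i + z.1 i| ≤ 1) ∧
      ‖X z‖ ≤ 600 * discrepancyScale (Module.finrank ℝ V) σ f ∧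
      1 / 10 * (Fintype.card ι : ℝ) ≤ Finset.card {i | |x₀ i + z.1 i| = 1} := by
  set D := discrepancyScale (Module.finrank ℝ V) σ f
  have hσD : σ ≤ D := le_discrepancyScale _ σ f
  have hp := Nat.clog_pos one_lt_two hd
  have hdim : Module.finrank ℝ V ≤ 2 ^ (Nat.clog 2 (Module.finrank ℝ V) + 1) :=
    (Nat.le_pow_clog one_lt_two _).trans (Nat.pow_le_pow_right two_pos (Nat.le_succ _))
  have hsv : 20000 * ((Nat.clog 2 (Module.finrank ℝ V) + 1 : ℕ) : ℝ) ^ 3 *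
      (σ ^ 2 * (10 * f ^ 2)) ≤ (100 * D) ^ 4 := by
    calc _ ≤ 20000 * (5 * Real.log (Module.finrank ℝ V)) ^ 3 * (σ ^ 2 * (10 * f ^ 2)) := by
          gcongr
          exact clog_two_add_one_le_five_mul_log hd
      _ = 25000000 * (Real.log (Module.finrank ℝ V) ^ 3 * (σ * f) ^ 2) := by ring
      _ ≤ 25000000 * D ^ 4 := by
          gcongr
          exact log_pow_three_mul_le_discrepancyScale_pow_four _ hσ.le hf.le
      _ ≤ (100 * D) ^ 4 := by nlinarith [sq_nonneg (D ^ 2)]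
  obtain ⟨z, hz, hnorm, hcard⟩ := h.exists_partial_coloring hι hH (by omega) hdim
    (R := 100 * D) (by linarith) (by nlinarith) hsv hx₀
  exact ⟨z, hz, hnorm.trans_eq (by ring), hcard⟩

theorem exists_partial_coloring [Nonempty ι] {A : ι → V →L[ℝ] V}
    (hA : ∀ i, (A i : V →ₗ[ℝ] V).IsSymmetric) (hd : 2 ≤ Module.finrank ℝ V) {σ f : ℝ}
    (hσ : 0 < σ) (hf : 0 < f) (hσA : ‖∑ i, A i * A i‖ ≤ σ ^ 2)
    (hfA : ∑ i, opTrace (A i * A i) ≤ Fintype.card ι * f ^ 2) {x₀ : ι → ℝ}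
    (hx₀ : ∀ i, |x₀ i| ≤ 1) :
    ∃ x : ι → ℝ, (∀ i, |x i| ≤ 1) ∧
      ‖∑ i, (x i - x₀ i) • A i‖ ≤ 600 * discrepancyScale (Module.finrank ℝ V) σ f ∧
      1 / 10 * (Fintype.card ι : ℝ) ≤ Finset.card {i | |x i| = 1} := by
  rcases lt_or_ge (Fintype.card ι) 10 with hι | hι
  · obtain ⟨x, hx, hnorm, i, hi⟩ := exists_abs_eq_one_norm_sum_le
      (norm_le_of_norm_sum_mul_self_le hA hσ.le hσA) hx₀
    have hcard : (1 : ℝ) ≤ Finset.card {i | |x i| = 1} := by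
      exact_mod_cast Finset.card_pos.2 ⟨i, by simpa using hi⟩
    have : (Fintype.card ι : ℝ) < 10 := by exact_mod_cast hι
    have := le_discrepancyScale (Module.finrank ℝ V) σ f
    exact ⟨x, hx, by linarith, by linarith⟩
  · have hσy (y : V) : ∑ i, ‖A i y‖ ^ 2 ≤ σ ^ 2 * ‖y‖ ^ 2 :=
      (sum_norm_sq_apply_le_norm_sum_mul_self hA y).trans (by gcongr)
    obtain ⟨H, hH, hX⟩ := exists_submodule_pencilBound (X := pencil A) (v := f ^ 2)
      (EuclideanSpace.basisFun ι ℝ) (isSymmetric_pencil hA) (sq_nonneg σ) (by positivity)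
      (by simpa only [pencil_basisFun] using hσy) (by simpa [pencil_basisFun] using hfA)
    rw [finrank_euclideanSpace] at hH
    obtain ⟨z, hz, hnorm, hcard⟩ := hX.exists_norm_le_discrepancyScale hσ hf hι hH hd hx₀
    exact ⟨fun i ↦ x₀ i + z.1 i, hz, by simpa [pencil_apply] using hnorm, hcard⟩

end Coloring

section Matrix

variable {m : Type*} [Fintype m] [DecidableEq m]

theorem opNorm_eq_norm_toEuclideanCLM (M : Matrix m m ℝ) :
    opNorm M = ‖Matrix.toEuclideanCLM (n := m) (𝕜 := ℝ) M‖ :=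
  rfl

theorem isSymmetric_toEuclideanCLM {M : Matrix m m ℝ} (hM : M.IsSymm) :
    (Matrix.toEuclideanCLM (n := m) (𝕜 := ℝ) M :
      EuclideanSpace ℝ m →ₗ[ℝ] EuclideanSpace ℝ m).IsSymmetric :=
  Matrix.isSymmetric_toEuclideanLin_iff.2 hM

theorem opTrace_toEuclideanCLM_mul_self {M : Matrix m m ℝ} (hM : M.IsSymm) :
    opTrace (Matrix.toEuclideanCLM (n := m) (𝕜 := ℝ) M *
      Matrix.toEuclideanCLM (n := m) (𝕜 := ℝ) M) = frobNormSq M := by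
  rw [opTrace_mul_self_eq_sum_norm_sq (EuclideanSpace.basisFun m ℝ)
    (isSymmetric_toEuclideanCLM hM), frobNormSq, Finset.sum_comm]
  simp [EuclideanSpace.norm_sq_eq]

end Matrix

end PartialColoring

/-- **Main Partial Coloring Lemma (Lemma 3.1), existential form.** There are universal
constants `c, c' > 0` such that for all positive integers `n`, `d ≥ 2`, reals `σ, f > 0`,
symmetric matrices `A 1, …, A n ∈ ℝ^{d×d}` with `‖∑ A i ²‖_op ≤ σ²` and
`∑ ‖A i‖_F² ≤ n f²`, and any `x₀ ∈ (-1,1)ⁿ`, there is `x ∈ [-1,1]ⁿ` with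
`‖∑ (x i - x₀ i) • A i‖_op ≤ c (σ + (log d)^{3/4} √(σ f))` and at least `c' n`
coordinates of `x` in `{±1}`. -/
theorem main_partial_coloring :
    ∃ c c' : ℝ, 0 < c ∧ 0 < c' ∧ ∀ (n d : ℕ), 0 < n → 2 ≤ d →
      ∀ (σ f : ℝ), 0 < σ → 0 < f →
      ∀ A : Fin n → Matrix (Fin d) (Fin d) ℝ,
        (∀ i, (A i).IsSymm) →
        opNorm (∑ i, A i * A i) ≤ σ ^ 2 →
        (∑ i, frobNormSq (A i)) ≤ (n : ℝ) * f ^ 2 →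
        ∀ x₀ : Fin n → ℝ, (∀ i, x₀ i ∈ Set.Ioo (-1 : ℝ) 1) →
          ∃ x : Fin n → ℝ, (∀ i, x i ∈ Set.Icc (-1 : ℝ) 1) ∧
            opNorm (∑ i, (x i - x₀ i) • A i) ≤
              c * (σ + (Real.log d) ^ ((3 : ℝ) / 4) * Real.sqrt (σ * f)) ∧
            c' * n ≤ ({i : Fin n | x i = 1 ∨ x i = -1}.ncard : ℝ) := by
  refine ⟨600, 1 / 10, by norm_num, by norm_num,
    fun n d hn hd σ f hσ hf A hA hσA hfA x₀ hx₀ ↦ ?_⟩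
  have : NeZero n := ⟨hn.ne'⟩
  let T := Matrix.toEuclideanCLM (n := Fin d) (𝕜 := ℝ)
  obtain ⟨x, hx, hnorm, hcard⟩ := PartialColoring.exists_partial_coloring
    (A := fun i ↦ T (A i)) (fun i ↦ PartialColoring.isSymmetric_toEuclideanCLM (hA i))
    (by simpa using hd) hσ hf
    (by simpa [PartialColoring.opNorm_eq_norm_toEuclideanCLM, T] using hσA)
    (by simpa [PartialColoring.opTrace_toEuclideanCLM_mul_self (hA _), T] using hfA)
    (fun i ↦ abs_le.2 ⟨(hx₀ i).1.le, (hx₀ i).2.le⟩)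
  refine ⟨x, fun i ↦ abs_le.1 (hx i), ?_, ?_⟩
  · simpa [PartialColoring.opNorm_eq_norm_toEuclideanCLM, T, PartialColoring.discrepancyScale]
      using hnorm
  · simpa [← abs_eq (zero_le_one (α := ℝ)), Set.ncard_eq_toFinset_card'] using hcard
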